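/- arXiv:1201.1358 — 9 statements merged into one kernel-verified Lean document; each statement's English description precedes it below -/
import Mathlib

section
/- Let A ≥ 0 and B, k ∈ ℝ, not all three of A, B, k equal to zero, and set D = 4A² − 4Bk − k². Consider the quadratic polynomial Q(z) = (−A + iB)z² − i(2B + k)z + (A + iB) (which equals (1−z)²·(A(1+z)/(1−z) + iB) − ikz). Then: (1) D < 0 if and only if k < 2(−B − √(A² + B²)) or k > 2(−B + √(A² + B²)); (2) if D < 0 then Q has a root in the open unit disk 𝔻 = {z : |z| < 1}; (3) if D ≥ 0 then every root of Q has modulus 1; (4) D = 0 if and only if k = 2(−B + √(A² + B²)) or k = 2(−B − √(A² + B²)), and in that case Q has a double root, lying on the unit circle. -/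
open Complex Real

open scoped ComplexConjugate

/-!
Up to the factor `i`, `Q` is the self-inversive quadratic `a z² - m z + ā` with `a = B + iA` and
`m = 2B + k`, and `D = 4|a|² - m²`. Multiplying the equation of a root `z` by `z̄` gives
`|z|² (a z) + conj (a z) = m |z|²`. If `|z| = 1`, this reads `m = 2 Re (a z)`, so `m² ≤ 4|a|²`.
Otherwise `a z` is real, and `m² |z|² = |a|² (|z|² + 1)² > 4 |a|² |z|²` when `z ≠ 0` and `a ≠ 0`.
Hence the sign of `D` decides whether the roots lie on the circle. Off the circle, the reflection
`z ↦ 1 / z̄` sends a root outside it to a root inside; if `D = 0`, then `(2 a z - m)² = -D = 0`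
makes every root double.
-/

/-- The normal form `a z² - m z + ā`, with `m` real, of a self-inversive quadratic, i.e. one whose
set of nonzero roots is symmetric about the unit circle. The case `a = 0` is allowed. -/
def selfInversiveQuadratic (a : ℂ) (m : ℝ) (z : ℂ) : ℂ :=
  a * z ^ 2 - m * z + conj a

namespace selfInversiveQuadratic

variable {a z : ℂ} {m : ℝ}

theorem exists_root (a : ℂ) (m : ℝ) : ∃ z, selfInversiveQuadratic a m z = 0 := by
  rcases eq_or_ne a 0 with rfl | ha
  · exact ⟨0, by simp [selfInversiveQuadratic]⟩
  · obtain ⟨z, hz⟩ :=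
      exists_quadratic_eq_zero ha (IsAlgClosed.exists_eq_mul_self (discrim a (-m) (conj a)))
    exact ⟨z, by rw [selfInversiveQuadratic, ← hz]; ring⟩

theorem apply_inv_conj (a : ℂ) (m : ℝ) (hz : z ≠ 0) :
    selfInversiveQuadratic a m (conj z)⁻¹ =
      conj (selfInversiveQuadratic a m z) / conj z ^ 2 := by
  have hz' : conj z ≠ 0 := (map_ne_zero _).mpr hz
  simp only [selfInversiveQuadratic, map_add, map_sub, map_mul, map_pow, conj_conj, conj_ofReal]
  field_simp
  ring

theorem norm_sq_mul_add_conj (h : selfInversiveQuadratic a m z = 0) :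
    ((‖z‖ ^ 2 : ℝ) : ℂ) * (a * z) + conj (a * z) = ((m * ‖z‖ ^ 2 : ℝ) : ℂ) := by
  rw [selfInversiveQuadratic] at h
  push_cast
  rw [← mul_conj', map_mul]
  linear_combination conj z * h

theorem norm_sq_add_one_mul_re (h : selfInversiveQuadratic a m z = 0) :
    (‖z‖ ^ 2 + 1) * (a * z).re = m * ‖z‖ ^ 2 := by
  have hre := congrArg re (norm_sq_mul_add_conj h)
  rw [add_re, re_ofReal_mul, conj_re, ofReal_re] at hre
  linarith

theorem norm_sq_sub_one_mul_im (h : selfInversiveQuadratic a m z = 0) :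
    (‖z‖ ^ 2 - 1) * (a * z).im = 0 := by
  have him := congrArg im (norm_sq_mul_add_conj h)
  rw [add_im, im_ofReal_mul, conj_im, ofReal_im] at him
  linarith

theorem sq_le_of_root_of_norm_eq_one (h : selfInversiveQuadratic a m z = 0) (hz : ‖z‖ = 1) :
    m ^ 2 ≤ 4 * ‖a‖ ^ 2 := by
  have hm : m = 2 * (a * z).re := by
    have := norm_sq_add_one_mul_re h
    rw [hz] at this
    linarith
  have hre : (a * z).re ^ 2 ≤ ‖a‖ ^ 2 := by
    simpa [hz] using sq_le_sq' (abs_le.mp (abs_re_le_norm (a * z))).1 (re_le_norm (a * z))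
  rw [hm]
  linarith

theorem sq_mul_norm_sq_of_root_of_norm_ne_one (h : selfInversiveQuadratic a m z = 0)
    (hz : ‖z‖ ≠ 1) (hz₀ : z ≠ 0) : m ^ 2 * ‖z‖ ^ 2 = ‖a‖ ^ 2 * (‖z‖ ^ 2 + 1) ^ 2 := by
  have him : (a * z).im = 0 := by
    refine (mul_eq_zero.mp (norm_sq_sub_one_mul_im h)).resolve_left ?_
    rwa [sub_eq_zero, pow_eq_one_iff_of_nonneg (norm_nonneg z) two_ne_zero]
  have hre : (a * z).re ^ 2 = ‖a‖ ^ 2 * ‖z‖ ^ 2 := by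
    rw [← mul_pow, ← norm_mul, Complex.sq_norm, normSq_apply, him]
    ring
  apply mul_right_cancel₀ (pow_ne_zero 2 (norm_ne_zero_iff.mpr hz₀))
  calc
    m ^ 2 * ‖z‖ ^ 2 * ‖z‖ ^ 2 = (m * ‖z‖ ^ 2) ^ 2 := by ring
    _ = (‖z‖ ^ 2 + 1) ^ 2 * (a * z).re ^ 2 := by rw [← norm_sq_add_one_mul_re h, mul_pow]
    _ = ‖a‖ ^ 2 * (‖z‖ ^ 2 + 1) ^ 2 * ‖z‖ ^ 2 := by rw [hre]; ring

theorem lt_sq_of_root_of_norm_ne_one (h : selfInversiveQuadratic a m z = 0) (hz : ‖z‖ ≠ 1)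
    (hne : ¬(a = 0 ∧ m = 0)) : 4 * ‖a‖ ^ 2 < m ^ 2 := by
  rcases eq_or_ne a 0 with rfl | ha
  · have hm : m ≠ 0 := fun hm ↦ hne ⟨rfl, hm⟩
    simpa using sq_pos_of_ne_zero hm
  · have hz₀ : z ≠ 0 := by
      rintro rfl
      exact ha (by simpa [selfInversiveQuadratic] using h)
    have hsq : ‖z‖ ^ 2 - 1 ≠ 0 := by
      rwa [sub_ne_zero, ne_eq, pow_eq_one_iff_of_nonneg (norm_nonneg z) two_ne_zero]
    have h_am_gm : 4 * ‖z‖ ^ 2 < (‖z‖ ^ 2 + 1) ^ 2 := by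
      linarith [sq_pos_of_ne_zero hsq]
    refine lt_of_mul_lt_mul_right ?_ (sq_nonneg ‖z‖)
    calc
      4 * ‖a‖ ^ 2 * ‖z‖ ^ 2 = ‖a‖ ^ 2 * (4 * ‖z‖ ^ 2) := by ring
      _ < ‖a‖ ^ 2 * (‖z‖ ^ 2 + 1) ^ 2 := by gcongr
      _ = m ^ 2 * ‖z‖ ^ 2 := (sq_mul_norm_sq_of_root_of_norm_ne_one h hz hz₀).symm

theorem norm_eq_one_of_root (h : selfInversiveQuadratic a m z = 0) (hne : ¬(a = 0 ∧ m = 0))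
    (hm : m ^ 2 ≤ 4 * ‖a‖ ^ 2) : ‖z‖ = 1 :=
  not_ne_iff.mp fun hz ↦ (lt_sq_of_root_of_norm_ne_one h hz hne).not_ge hm

theorem exists_root_norm_lt_one (hm : 4 * ‖a‖ ^ 2 < m ^ 2) :
    ∃ z, ‖z‖ < 1 ∧ selfInversiveQuadratic a m z = 0 := by
  obtain ⟨z, hz⟩ := exists_root a m
  rcases lt_trichotomy ‖z‖ 1 with h_lt | h_eq | h_gt
  · exact ⟨z, h_lt, hz⟩
  · exact absurd (sq_le_of_root_of_norm_eq_one hz h_eq) hm.not_ge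
  · have hz₀ : z ≠ 0 := norm_pos_iff.mp (one_pos.trans h_gt)
    refine ⟨(conj z)⁻¹, ?_, by rw [apply_inv_conj a m hz₀, hz, map_zero, zero_div]⟩
    rw [norm_inv, norm_conj]
    exact inv_lt_one_of_one_lt₀ h_gt

theorem two_mul_mul_sub_eq_zero_of_root (h : selfInversiveQuadratic a m z = 0)
    (hm : m ^ 2 = 4 * ‖a‖ ^ 2) : 2 * a * z - m = 0 := by
  have hmC : (m : ℂ) ^ 2 = 4 * (a * conj a) := by
    rw [mul_conj']
    exact_mod_cast hm
  rw [selfInversiveQuadratic] at h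
  refine (pow_eq_zero_iff two_ne_zero).mp ?_
  linear_combination 4 * a * h + hmC

end selfInversiveQuadratic

theorem discriminant_eq_sq_sub_sq (A B k : ℝ) :
    4 * A ^ 2 - 4 * B * k - k ^ 2 = (2 * √(A ^ 2 + B ^ 2)) ^ 2 - (2 * B + k) ^ 2 := by
  rw [mul_pow, Real.sq_sqrt (by positivity)]
  ring

theorem discriminant_neg_iff (A B k : ℝ) :
    4 * A ^ 2 - 4 * B * k - k ^ 2 < 0 ↔
      k < 2 * (-B - √(A ^ 2 + B ^ 2)) ∨ k > 2 * (-B + √(A ^ 2 + B ^ 2)) := by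
  rw [discriminant_eq_sq_sub_sq, sub_neg, sq_lt_sq, abs_of_nonneg (by positivity), lt_abs, or_comm]
  apply or_congr <;> constructor <;> intro h <;> linarith

theorem discriminant_eq_zero_iff (A B k : ℝ) :
    4 * A ^ 2 - 4 * B * k - k ^ 2 = 0 ↔
      k = 2 * (-B + √(A ^ 2 + B ^ 2)) ∨ k = 2 * (-B - √(A ^ 2 + B ^ 2)) := by
  rw [discriminant_eq_sq_sub_sq, sub_eq_zero, eq_comm, sq_eq_sq_iff_eq_or_eq_neg]
  apply or_congr <;> constructor <;> intro h <;> linarith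

theorem discriminant_eq_norm_sq_sub_sq (A B k : ℝ) :
    4 * A ^ 2 - 4 * B * k - k ^ 2 = 4 * ‖(B + A * I : ℂ)‖ ^ 2 - (2 * B + k) ^ 2 := by
  rw [norm_add_mul_I, discriminant_eq_sq_sub_sq, add_comm (B ^ 2)]
  ring

theorem quadratic_eq_I_mul_selfInversiveQuadratic (A B k : ℝ) (z : ℂ) :
    (-(A : ℂ) + I * B) * z ^ 2 - I * (2 * B + k) * z + (A + I * B) =
      I * selfInversiveQuadratic (B + A * I) (2 * B + k) z := by
  simp only [selfInversiveQuadratic, map_add, map_mul, conj_ofReal, conj_I]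
  push_cast
  linear_combination (A - A * z ^ 2) * I_sq

theorem stmt_2_general (A B k : ℝ) (hnz : ¬(A = 0 ∧ B = 0 ∧ k = 0))
    (D : ℝ) (hD : D = 4 * A ^ 2 - 4 * B * k - k ^ 2)
    (Q : ℂ → ℂ)
    (hQ : ∀ z : ℂ, Q z = (-(A : ℂ) + Complex.I * B) * z ^ 2
      - Complex.I * (2 * B + k) * z + ((A : ℂ) + Complex.I * B)) :
    (D < 0 ↔ (k < 2 * (-B - Real.sqrt (A ^ 2 + B ^ 2)) ∨
              k > 2 * (-B + Real.sqrt (A ^ 2 + B ^ 2)))) ∧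
    (D < 0 → ∃ z : ℂ, ‖z‖ < 1 ∧ Q z = 0) ∧
    (0 ≤ D → ∀ z : ℂ, Q z = 0 → ‖z‖ = 1) ∧
    ((D = 0 ↔ (k = 2 * (-B + Real.sqrt (A ^ 2 + B ^ 2)) ∨
               k = 2 * (-B - Real.sqrt (A ^ 2 + B ^ 2)))) ∧
     (D = 0 → ∃ z : ℂ, ‖z‖ = 1 ∧ Q z = 0 ∧
        2 * (-(A : ℂ) + Complex.I * B) * z - Complex.I * (2 * B + k) = 0)) := by
  have hD_norm := hD.trans (discriminant_eq_norm_sq_sub_sq A B k)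
  have hQ_root (z : ℂ) : Q z = 0 ↔ selfInversiveQuadratic (B + A * I) (2 * B + k) z = 0 := by
    rw [hQ, quadratic_eq_I_mul_selfInversiveQuadratic, mul_eq_zero, or_iff_right I_ne_zero]
  have h_circle (hD₀ : 0 ≤ D) (z : ℂ) (hz : Q z = 0) : ‖z‖ = 1 := by
    refine selfInversiveQuadratic.norm_eq_one_of_root ((hQ_root z).mp hz) ?_ (by linarith)
    rintro ⟨ha, hm⟩
    obtain ⟨hB, hA⟩ : B = 0 ∧ A = 0 := by simpa [Complex.ext_iff] using ha
    exact hnz ⟨hA, hB, by linarith⟩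
  refine ⟨hD ▸ discriminant_neg_iff A B k, fun hD₀ ↦ ?_, h_circle,
    hD ▸ discriminant_eq_zero_iff A B k, fun hD₀ ↦ ?_⟩
  · simpa only [hQ_root] using selfInversiveQuadratic.exists_root_norm_lt_one (by linarith)
  · obtain ⟨z, hz⟩ := selfInversiveQuadratic.exists_root (B + A * I) (2 * B + k)
    have hQz := (hQ_root z).mpr hz
    have h_double := selfInversiveQuadratic.two_mul_mul_sub_eq_zero_of_root hz (by linarith)
    push_cast at h_double
    exact ⟨z, h_circle hD₀.ge z hQz, hQz, by linear_combination I * h_double - 2 * A * z * I_sq⟩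

/-- properties of the quadratic
`Q(z) = (-A + iB) z² - i(2B + k) z + (A + iB)` and its discriminant
`D = 4A² - 4Bk - k²`, describing ellipticity/hyperbolicity/parabolicity of the
semigroup of automorphisms generated by `(1-z)²(A(1+z)/(1-z) + iB) - ikz`. -/
theorem stmt_2 (A B k : ℝ) (hA : 0 ≤ A) (hnz : ¬(A = 0 ∧ B = 0 ∧ k = 0))
    (D : ℝ) (hD : D = 4 * A ^ 2 - 4 * B * k - k ^ 2)
    (Q : ℂ → ℂ)
    (hQ : ∀ z : ℂ, Q z = (-(A : ℂ) + Complex.I * B) * z ^ 2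
      - Complex.I * (2 * B + k) * z + ((A : ℂ) + Complex.I * B)) :
    -- (1) characterization of D < 0
    (D < 0 ↔ (k < 2 * (-B - Real.sqrt (A ^ 2 + B ^ 2)) ∨
              k > 2 * (-B + Real.sqrt (A ^ 2 + B ^ 2)))) ∧
    -- (2) if D < 0, then Q has a root in the open unit disk
    (D < 0 → ∃ z : ℂ, ‖z‖ < 1 ∧ Q z = 0) ∧
    -- (3) if D ≥ 0, every root of Q has modulus 1
    (0 ≤ D → ∀ z : ℂ, Q z = 0 → ‖z‖ = 1) ∧
    -- (4) characterization of D = 0, and a double root on the unit circle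
    ((D = 0 ↔ (k = 2 * (-B + Real.sqrt (A ^ 2 + B ^ 2)) ∨
               k = 2 * (-B - Real.sqrt (A ^ 2 + B ^ 2)))) ∧
     (D = 0 → ∃ z : ℂ, ‖z‖ = 1 ∧ Q z = 0 ∧
        2 * (-(A : ℂ) + Complex.I * B) * z - Complex.I * (2 * B + k) = 0)) :=
  stmt_2_general A B k hnz D hD Q hQ
end

section
/- Let p̃ : 𝔻 → ℂ be holomorphic with Re p̃(z) ≥ 0 for all z ∈ 𝔻, and let k₀ ∈ ℝ. Suppose that for every z ∈ 𝔻 there exists a differentiable function x : ℝ → 𝔻 with x(0) = z and x'(t) = (1 − x(t))² p̃(x(t)) − i k₀ x(t) for all t ∈ ℝ (i.e., the vector field is complete in 𝔻, so the generated semigroup consists of automorphisms of 𝔻). Then for every k ∈ ℝ the same holds: for every z ∈ 𝔻 there exists a differentiable x : ℝ → 𝔻 with x(0) = z and x'(t) = (1 − x(t))² p̃(x(t)) − i k x(t) for all t ∈ ℝ. -/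
open Complex Metric

/-!
Let `φ` be the flow of a holomorphic vector field `F` that is complete in the disk. Each time-`t`
map is holomorphic, so by Schwarz–Pick
`‖φ_t z - φ_t 0‖² - ‖z‖² ‖1 - conj (φ_t 0) φ_t z‖² ≤ 0` for all real `t`, with equality at `t = 0`.
Since `t` may have either sign, the derivative at `t = 0` vanishes, which says that
`(F z - F 0 + conj (F 0) z²) / z` has zero real part. This quotient is holomorphic, hence an
imaginary constant, and `F z = a + i b z - conj a z²` with `b` real. Conversely, every such field is
complete, and the family is stable under adding `i r z` with `r` real.
-/

open Set Filter Topology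
open scoped ComplexConjugate

section CompleteVectorField

variable {E : Type*} [NormedAddCommGroup E] [NormedSpace ℝ E]

/-- The vector field `v` is complete in `s`: through every point of `s` passes an integral curve
of `v` that is defined for all real times and stays in `s`. -/
def IsCompleteVectorFieldOn (v : E → E) (s : Set E) : Prop :=
  ∀ z ∈ s, ∃ γ : ℝ → E, (∀ t, γ t ∈ s) ∧ γ 0 = z ∧ IsIntegralCurve γ fun _ ↦ v

lemma IsCompleteVectorFieldOn.congr {v w : E → E} {s : Set E} (hv : IsCompleteVectorFieldOn v s)
    (hvw : EqOn v w s) : IsCompleteVectorFieldOn w s := by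
  intro z hz
  obtain ⟨γ, hγs, hγ0, hγ⟩ := hv z hz
  exact ⟨γ, hγs, hγ0, fun t ↦ (hγ t).congr_deriv (hvw (hγs t))⟩

lemma exists_isIntegralCurve_continuousLinearMap [CompleteSpace E] (A : E →L[ℝ] E) (x₀ : E) :
    ∃ γ : ℝ → E, γ 0 = x₀ ∧ IsIntegralCurve γ fun _ ↦ A := by
  refine ⟨fun t ↦ NormedSpace.exp (t • A) x₀, by simp, fun t ↦ ?_⟩
  simpa using (hasDerivAt_exp_smul_const' (𝕂 := ℝ) A t).clm_apply (hasDerivAt_const t x₀)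

lemma norm_sub_le_of_norm_deriv_lt_of_norm_sub_le {f f' : ℝ → E} {a b r κ : ℝ} (hκ : 0 ≤ κ)
    (hf : ∀ t ∈ Icc a b, HasDerivAt f (f' t) t)
    (hbound : ∀ t ∈ Ico a b, ‖f t - f a‖ ≤ r → ‖f' t‖ < κ) (hr : κ * (b - a) ≤ r) :
    ∀ t ∈ Icc a b, ‖f t - f a‖ ≤ κ * (t - a) := by
  refine image_norm_le_of_norm_deriv_right_lt_deriv_boundary (f' := f') (B' := fun _ ↦ κ)
    (fun t ht ↦ ((hf t ht).sub_const _).continuousAt.continuousWithinAt)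
    (fun t ht ↦ ((hf t (Ico_subset_Icc_self ht)).sub_const _).hasDerivWithinAt) (by simp)
    (fun t ↦ by simpa using ((hasDerivAt_id t).sub_const a).const_mul κ) fun t ht hcontact ↦ ?_
  refine hbound t ht (hcontact.trans_le (le_trans ?_ hr))
  gcongr
  exact ht.2.le

end CompleteVectorField

section HolomorphicFlow

variable {F : ℂ → ℂ} {U : Set ℂ}

lemma exists_norm_sub_sub_deriv_mul_le (hU : IsOpen U) (hF : DifferentiableOn ℂ F U) {K : Set ℂ}
    (hK : IsCompact K) (hKU : K ⊆ U) :
    ∃ δ > 0, ∃ C ≥ 0, ∀ a ∈ K, ∀ b ∈ ball a δ,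
      ‖F b - F a - deriv F a * (b - a)‖ ≤ C * ‖b - a‖ ^ 2 := by
  obtain ⟨δ, hδ, hδU⟩ := hK.exists_cthickening_subset_open hU hKU
  have hF' : DifferentiableOn ℂ (deriv F) U := hF.deriv hU
  obtain ⟨C, hC⟩ := hK.cthickening.exists_bound_of_continuousOn
    ((hF'.deriv hU).continuousOn.mono hδU)
  have hsub : ∀ a ∈ K, ball a δ ⊆ cthickening δ K := fun a ha ↦
    ball_subset_closedBall.trans (closedBall_subset_cthickening ha δ)
  refine ⟨δ, hδ, max C 0, le_max_right _ _, fun a ha b hb ↦ ?_⟩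
  set s := ball a δ ∩ closedBall a ‖b - a‖
  have hbs : b ∈ s := ⟨hb, by simp [dist_eq_norm]⟩
  have has : a ∈ s := ⟨mem_ball_self hδ, by simp⟩
  have hderiv_sub : ∀ x ∈ s, ‖deriv F x - deriv F a‖ ≤ max C 0 * ‖b - a‖ := fun x hx ↦
    calc ‖deriv F x - deriv F a‖ ≤ max C 0 * ‖x - a‖ :=
          (convex_ball a δ).norm_image_sub_le_of_norm_deriv_le
            (fun u hu ↦ hF'.differentiableAt (hU.mem_nhds (hδU (hsub a ha hu))))
            (fun u hu ↦ (hC u (hsub a ha hu)).trans (le_max_left _ _)) has.1 hx.1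
      _ ≤ max C 0 * ‖b - a‖ := by
          gcongr
          simpa [dist_eq_norm] using hx.2
  have hF_sub : ∀ x ∈ s,
      HasDerivWithinAt (fun u ↦ F u - deriv F a * u) (deriv F x - deriv F a) s x := fun x hx ↦ by
    simpa only [mul_one] using
      ((hF.differentiableAt (hU.mem_nhds (hδU (hsub a ha hx.1)))).hasDerivAt.fun_sub
        ((hasDerivAt_id' x).const_mul (deriv F a))).hasDerivWithinAt
  calc ‖F b - F a - deriv F a * (b - a)‖
      = ‖F b - deriv F a * b - (F a - deriv F a * a)‖ := by congr 1; ring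
    _ ≤ max C 0 * ‖b - a‖ * ‖b - a‖ :=
        Convex.norm_image_sub_le_of_norm_hasDerivWithin_le hF_sub hderiv_sub
          ((convex_ball a δ).inter (convex_closedBall a _)) has hbs
    _ = max C 0 * ‖b - a‖ ^ 2 := by ring

lemma exists_hasDerivAt_eq_mul {f : ℝ → ℂ} (hf : Continuous f) :
    ∃ c : ℝ → ℂ, c 0 = 1 ∧ (∀ t, c t ≠ 0) ∧ ∀ t, HasDerivAt c (f t * c t) t := by
  refine ⟨fun t ↦ exp (∫ s in (0 : ℝ)..t, f s), by simp, fun t ↦ exp_ne_zero _, fun t ↦ ?_⟩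
  simpa only [mul_comm] using (hf.integral_hasStrictDerivAt 0 t).hasDerivAt.cexp

lemma hasDerivAt_sub_div_of_linearization {x y c : ℝ → ℂ} {m : ℂ} {t : ℝ}
    (hx : HasDerivAt x (F (x t)) t) (hy : HasDerivAt y (F (y t)) t)
    (hc : HasDerivAt c (m * c t) t) (hc0 : c t ≠ 0) :
    HasDerivAt (fun s ↦ (y s - x s) / c s) ((F (y t) - F (x t) - m * (y t - x t)) / c t) t := by
  refine ((hy.sub hx).div hc hc0).congr_deriv ?_
  simp only [Pi.sub_apply]
  field_simp

/-- Variation of constants: `u = (y - x) / c` has derivative of second order in `y - x`, so as long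
as `‖u‖ ≤ 2 * ‖u 0‖` it moves by `O(‖u 0‖ ^ 2)` only, which in turn keeps `‖u‖ ≤ 2 * ‖u 0‖`. -/
lemma norm_sub_sub_linearization_le {x y c : ℝ → ℂ} {m : ℝ → ℂ} {T A B C δ : ℝ} (hT : 0 ≤ T)
    (hx : ∀ t ∈ Icc 0 T, HasDerivAt x (F (x t)) t) (hy : ∀ t ∈ Icc 0 T, HasDerivAt y (F (y t)) t)
    (hc : ∀ t ∈ Icc 0 T, HasDerivAt c (m t * c t) t) (hc0 : c 0 = 1)
    (hcne : ∀ t ∈ Icc 0 T, c t ≠ 0) (hA : ∀ t ∈ Icc 0 T, ‖c t‖ ≤ A)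
    (hB : ∀ t ∈ Icc 0 T, ‖(c t)⁻¹‖ ≤ B) (hC0 : 0 ≤ C)
    (hC : ∀ t ∈ Icc 0 T, ∀ b ∈ ball (x t) δ,
      ‖F b - F (x t) - m t * (b - x t)‖ ≤ C * ‖b - x t‖ ^ 2)
    (hne : y 0 ≠ x 0) (hδ : 2 * A * ‖y 0 - x 0‖ < δ)
    (hsmall : (4 * A ^ 2 * B * C + 1) * T * ‖y 0 - x 0‖ ≤ 1) :
    ‖y T - x T - (y 0 - x 0) * c T‖ ≤ A * (4 * A ^ 2 * B * C + 1) * T * ‖y 0 - x 0‖ ^ 2 := by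
  set r := ‖y 0 - x 0‖
  set u : ℝ → ℂ := fun t ↦ (y t - x t) / c t with hu
  have hr : 0 < r := norm_pos_iff.2 (sub_ne_zero.2 hne)
  have hA0 : 0 ≤ A := (norm_nonneg _).trans (hA 0 ⟨le_rfl, hT⟩)
  have hB0 : 0 ≤ B := (norm_nonneg _).trans (hB 0 ⟨le_rfl, hT⟩)
  have hu0 : u 0 = y 0 - x 0 := by simp [hu, hc0]
  have hcu : ∀ t ∈ Icc 0 T, y t - x t = c t * u t := fun t ht ↦ (mul_div_cancel₀ _ (hcne t ht)).symm
  have hdist : ∀ t ∈ Icc 0 T, ‖u t - u 0‖ ≤ r → ‖y t - x t‖ ≤ 2 * A * r := fun t ht hle ↦ by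
    have hut : ‖u t‖ ≤ 2 * r := by
      linarith [norm_le_insert' (u t) (u 0), congrArg norm hu0]
    calc ‖y t - x t‖ = ‖c t‖ * ‖u t‖ := by rw [hcu t ht, norm_mul]
      _ ≤ A * (2 * r) := by gcongr; exact hA t ht
      _ = 2 * A * r := by ring
  have hu_sub : ‖u T - u 0‖ ≤ (4 * A ^ 2 * B * C + 1) * r ^ 2 * (T - 0) := by
    refine norm_sub_le_of_norm_deriv_lt_of_norm_sub_le (r := r) (by positivity)
      (fun t ht ↦ hasDerivAt_sub_div_of_linearization (hx t ht) (hy t ht) (hc t ht) (hcne t ht))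
      (fun t ht hle ↦ ?_) (by nlinarith) T ⟨hT, le_rfl⟩
    have ht' := Ico_subset_Icc_self ht
    have hyx := hdist t ht' hle
    calc _ = ‖F (y t) - F (x t) - m t * (y t - x t)‖ * ‖(c t)⁻¹‖ := by
          rw [div_eq_mul_inv, norm_mul]
      _ ≤ C * (2 * A * r) ^ 2 * B := by
          gcongr
          · refine (hC t ht' _ (mem_ball_iff_norm.2 (hyx.trans_lt hδ))).trans ?_
            gcongr
          · exact hB t ht'
      _ < (4 * A ^ 2 * B * C + 1) * r ^ 2 := by nlinarith [sq_pos_of_pos hr]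
  calc ‖y T - x T - (y 0 - x 0) * c T‖ = ‖c T‖ * ‖u T - u 0‖ := by
        rw [hcu T ⟨hT, le_rfl⟩, ← hu0, ← norm_mul]
        ring_nf
    _ ≤ A * ((4 * A ^ 2 * B * C + 1) * r ^ 2 * (T - 0)) := by
        gcongr
        exact hA T ⟨hT, le_rfl⟩
    _ = _ := by ring

lemma hasDerivAt_of_eventually_norm_sub_sub_mul_le_sq {f : ℂ → ℂ} {f' z : ℂ} {M : ℝ}
    (h : ∀ᶠ w in 𝓝 z, ‖f w - f z - (w - z) * f'‖ ≤ M * ‖w - z‖ ^ 2) : HasDerivAt f f' z := by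
  refine hasDerivAt_iff_isLittleO.2 (Asymptotics.IsBigO.trans_isLittleO ?_
    (Asymptotics.isLittleO_pow_sub_sub z (m := 2) one_lt_two))
  exact Asymptotics.IsBigO.of_bound M (by simpa using h)

lemma differentiableAt_flow_of_nonneg (hU : IsOpen U) (hF : DifferentiableOn ℂ F U)
    {φ : ℂ → ℝ → ℂ} {z : ℂ} (hz : ∀ t, φ z t ∈ U) (h0 : ∀ᶠ w in 𝓝 z, φ w 0 = w)
    (hφ : ∀ᶠ w in 𝓝 z, IsIntegralCurve (φ w) fun _ ↦ F) {T : ℝ} (hT : 0 ≤ T) :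
    DifferentiableAt ℂ (fun w ↦ φ w T) z := by
  have hx : IsIntegralCurve (φ z) fun _ ↦ F := hφ.self_of_nhds
  have hz0 : φ z 0 = z := h0.self_of_nhds
  have hderiv : Continuous fun t ↦ deriv F (φ z t) :=
    (hF.deriv hU).continuousOn.comp_continuous hx.continuous hz
  obtain ⟨c, hc0, hcne, hc⟩ := exists_hasDerivAt_eq_mul hderiv
  have hc_cont : Continuous c := continuous_iff_continuousAt.2 fun t ↦ (hc t).continuousAt
  obtain ⟨A, hA⟩ := (isCompact_Icc (a := 0) (b := T)).exists_bound_of_continuousOn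
    hc_cont.continuousOn
  obtain ⟨B, hB⟩ := (isCompact_Icc (a := 0) (b := T)).exists_bound_of_continuousOn
    (hc_cont.inv₀ hcne).continuousOn
  obtain ⟨δ, hδ, C, hC0, hC⟩ := exists_norm_sub_sub_deriv_mul_le hU hF
    ((isCompact_Icc (a := 0) (b := T)).image hx.continuous)
    (image_subset_iff.2 fun t _ ↦ hz t)
  have hsmall : ∀ M ε : ℝ, 0 < ε → ∀ᶠ w in 𝓝 z, M * ‖w - z‖ < ε := fun M ε hε ↦ by
    have hM : Continuous fun w ↦ M * ‖w - z‖ := by fun_prop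
    exact hM.continuousAt.eventually_lt continuousAt_const (by simpa using hε)
  refine (hasDerivAt_of_eventually_norm_sub_sub_mul_le_sq (f' := c T)
    (M := A * (4 * A ^ 2 * B * C + 1) * T) ?_).differentiableAt
  filter_upwards [h0, hφ, hsmall (2 * A) δ hδ, hsmall ((4 * A ^ 2 * B * C + 1) * T) 1 one_pos]
    with w hw0 hw hwδ hw1
  rcases eq_or_ne w z with rfl | hwz
  · simp
  simpa only [hw0, hz0] using norm_sub_sub_linearization_le hT (fun t _ ↦ hx t) (fun t _ ↦ hw t)
    (fun t _ ↦ hc t) hc0 (fun t _ ↦ hcne t) hA hB hC0 (fun t ht ↦ hC _ (mem_image_of_mem _ ht))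
    (by rwa [hw0, hz0]) (by rwa [hw0, hz0]) (by rw [hw0, hz0]; exact hw1.le)

lemma differentiableAt_flow (hU : IsOpen U) (hF : DifferentiableOn ℂ F U)
    {φ : ℂ → ℝ → ℂ} {z : ℂ} (hz : ∀ t, φ z t ∈ U) (h0 : ∀ᶠ w in 𝓝 z, φ w 0 = w)
    (hφ : ∀ᶠ w in 𝓝 z, IsIntegralCurve (φ w) fun _ ↦ F) (T : ℝ) :
    DifferentiableAt ℂ (fun w ↦ φ w T) z := by
  rcases le_total 0 T with hT | hT
  · exact differentiableAt_flow_of_nonneg hU hF hz h0 hφ hT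
  · have hrev : ∀ᶠ w in 𝓝 z, IsIntegralCurve (fun t ↦ φ w (-t)) fun _ ↦ -F := by
      filter_upwards [hφ] with w hw t
      simpa [Function.comp_def] using (hw (-t)).scomp t (hasDerivAt_neg t)
    simpa using differentiableAt_flow_of_nonneg (φ := fun w t ↦ φ w (-t)) hU hF.neg
      (fun t ↦ hz (-t)) (by simpa using h0) hrev (neg_nonneg.2 hT)

end HolomorphicFlow

section UnitDisk

lemma sq_norm_one_sub_conj_mul_sub_sq_norm_sub (a b : ℂ) :
    ‖1 - conj a * b‖ ^ 2 - ‖b - a‖ ^ 2 = (1 - ‖a‖ ^ 2) * (1 - ‖b‖ ^ 2) := by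
  simp only [Complex.sq_norm, normSq_apply, sub_re, one_re, mul_re, conj_re, conj_im, sub_im,
    one_im, mul_im]
  ring

lemma norm_sub_lt_norm_one_sub_conj_mul {a b : ℂ} (ha : ‖a‖ < 1) (hb : ‖b‖ < 1) :
    ‖b - a‖ < ‖1 - conj a * b‖ := by
  have hpos : 0 < (1 - ‖a‖ ^ 2) * (1 - ‖b‖ ^ 2) :=
    mul_pos (by nlinarith [norm_nonneg a]) (by nlinarith [norm_nonneg b])
  refine lt_of_pow_lt_pow_left₀ 2 (norm_nonneg _) ?_
  linarith [sq_norm_one_sub_conj_mul_sub_sq_norm_sub a b]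

/-- Apply the Schwarz lemma to `f` followed by the disk automorphism that moves `f 0` to `0`. -/
lemma norm_sub_le_norm_mul_norm_one_sub_conj_mul {f : ℂ → ℂ} (hf : DifferentiableOn ℂ f (ball 0 1))
    (hmaps : MapsTo f (ball 0 1) (ball 0 1)) {z : ℂ} (hz : z ∈ ball (0 : ℂ) 1) :
    ‖f z - f 0‖ ≤ ‖z‖ * ‖1 - conj (f 0) * f z‖ := by
  have hnorm : ∀ w ∈ ball (0 : ℂ) 1, ‖f w‖ < 1 := fun w hw ↦ mem_ball_zero_iff.1 (hmaps hw)
  have hlt : ∀ w ∈ ball (0 : ℂ) 1, ‖f w - f 0‖ < ‖1 - conj (f 0) * f w‖ := fun w hw ↦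
    norm_sub_lt_norm_one_sub_conj_mul (hnorm 0 (mem_ball_self one_pos)) (hnorm w hw)
  have hpos : ∀ w ∈ ball (0 : ℂ) 1, 0 < ‖1 - conj (f 0) * f w‖ := fun w hw ↦
    (norm_nonneg _).trans_lt (hlt w hw)
  have hschwarz := norm_le_norm_of_mapsTo_ball
    (f := fun w ↦ (f w - f 0) / (1 - conj (f 0) * f w))
    ((hf.sub_const _).div ((hf.const_mul _).const_sub _) fun w hw ↦ norm_pos_iff.1 (hpos w hw))
    (fun w hw ↦ by
      simpa [norm_div] using (div_le_one (hpos w hw)).2 (hlt w hw).le)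
    (by simp) (mem_ball_zero_iff.1 hz)
  rwa [norm_div, div_le_iff₀ (hpos z hz)] at hschwarz

lemma exists_eq_I_mul_of_re_conj_mul_eq_zero {U : Set ℂ} (hU : IsOpen U) (hconn : IsPreconnected U)
    (h0 : 0 ∈ U) {H : ℂ → ℂ} (hH : DifferentiableOn ℂ H U) (hH0 : H 0 = 0)
    (hre : ∀ z ∈ U, (conj z * H z).re = 0) : ∃ b : ℝ, ∀ z ∈ U, H z = I * b * z := by
  have hq : DifferentiableOn ℂ (dslope H 0) U := (differentiableOn_dslope (hU.mem_nhds h0)).2 hH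
  have hre_ne : ∀ z ∈ U ∩ {0}ᶜ, (dslope H 0 z).re = 0 := by
    rintro z ⟨hzU, hz0⟩
    have hquot : dslope H 0 z = ((normSq z)⁻¹ : ℝ) * (conj z * H z) := by
      rw [dslope_of_ne _ hz0, slope_def_field, hH0, sub_zero, sub_zero, div_eq_mul_inv, inv_def]
      ring
    rw [hquot, re_ofReal_mul, hre z hzU, mul_zero]
  have hre_eq : ∀ z ∈ U, (dslope H 0 z).re = 0 :=
    EqOn.of_subset_closure hre_ne (continuous_re.comp_continuousOn hq.continuousOn)
      continuousOn_const inter_subset_left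
      ((dense_compl_singleton (0 : ℂ)).open_subset_closure_inter hU)
  obtain ⟨c, hc⟩ := AnalyticOnNhd.eq_const_of_re_eq_const (hq.analyticOnNhd hU) hre_eq hU
    ⟨⟨0, h0⟩, hconn⟩
  have hc_re : c.re = 0 := by rw [← hc 0 h0, hre_eq 0 h0]
  have hcI : c = I * c.im := by apply Complex.ext <;> simp [hc_re]
  refine ⟨c.im, fun z hz ↦ ?_⟩
  rw [← hcI, ← hc z hz]
  simpa [hH0, mul_comm] using (sub_smul_dslope H 0 z).symm

/-- The infinitesimal generators `a + i b z - conj a z²` (`b` real) of the one-parameter groups of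
automorphisms of the unit disk. -/
def diskAutGenerator (a : ℂ) (b : ℝ) (z : ℂ) : ℂ := a + I * b * z - conj a * z ^ 2

/-- This is the `su(1,1)` system whose projectivization `u / v` solves the Riccati equation
`x' = a + i b x - conj a x²`. -/
lemma exists_linear_system_solution (a : ℂ) (b : ℝ) (u₀ v₀ : ℂ) :
    ∃ u v : ℝ → ℂ, u 0 = u₀ ∧ v 0 = v₀ ∧
      (∀ t, HasDerivAt u (I * (b / 2) * u t + a * v t) t) ∧
      ∀ t, HasDerivAt v (conj a * u t - I * (b / 2) * v t) t := by
  let fst := ContinuousLinearMap.fst ℂ ℂ ℂ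
  let snd := ContinuousLinearMap.snd ℂ ℂ ℂ
  let A : ℂ × ℂ →L[ℂ] ℂ × ℂ :=
    ((I * (b / 2)) • fst + a • snd).prod (conj a • fst - (I * (b / 2)) • snd)
  obtain ⟨γ, hγ0, hγ⟩ :=
    exists_isIntegralCurve_continuousLinearMap (A.restrictScalars ℝ) (u₀, v₀)
  exact ⟨fun t ↦ (γ t).1, fun t ↦ (γ t).2, by simp [hγ0], by simp [hγ0],
    fun t ↦ (hγ t).fst, fun t ↦ (hγ t).snd⟩

lemma sq_norm_sub_sq_norm_eq_of_linear_system {a : ℂ} {b : ℝ} {u v : ℝ → ℂ}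
    (hu : ∀ t, HasDerivAt u (I * (b / 2) * u t + a * v t) t)
    (hv : ∀ t, HasDerivAt v (conj a * u t - I * (b / 2) * v t) t) (s t : ℝ) :
    ‖v s‖ ^ 2 - ‖u s‖ ^ 2 = ‖v t‖ ^ 2 - ‖u t‖ ^ 2 := by
  have hconst : ∀ t, HasDerivAt (fun t ↦ ‖v t‖ ^ 2 - ‖u t‖ ^ 2) 0 t := fun t ↦ by
    refine ((hv t).norm_sq.sub (hu t).norm_sq).congr_deriv ?_
    simp only [Complex.inner, mul_re, sub_re, conj_re, conj_im, neg_mul, sub_neg_eq_add, I_re,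
      div_ofNat_re, ofReal_re, zero_mul, I_im, div_ofNat_im, ofReal_im, zero_div, mul_zero,
      sub_self, mul_im, one_mul, zero_add, zero_sub, sub_im, mul_neg, add_re, add_im]
    ring
  exact is_const_of_deriv_eq_zero (fun t ↦ (hconst t).differentiableAt)
    (fun t ↦ (hconst t).deriv) s t

lemma isCompleteVectorFieldOn_diskAutGenerator (a : ℂ) (b : ℝ) :
    IsCompleteVectorFieldOn (diskAutGenerator a b) (ball 0 1) := by
  intro z hz
  obtain ⟨u, v, hu0, hv0, hu, hv⟩ := exists_linear_system_solution a b z 1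
  have hlt : ∀ t, ‖u t‖ < ‖v t‖ := fun t ↦ by
    refine lt_of_pow_lt_pow_left₀ 2 (norm_nonneg _) ?_
    have hcons := sq_norm_sub_sq_norm_eq_of_linear_system hu hv t 0
    have hz1 : ‖z‖ ^ 2 < 1 := (sq_lt_one_iff₀ (norm_nonneg z)).2 (mem_ball_zero_iff.1 hz)
    rw [hu0, hv0, norm_one] at hcons
    linarith
  have hpos : ∀ t, 0 < ‖v t‖ := fun t ↦ (norm_nonneg _).trans_lt (hlt t)
  refine ⟨fun t ↦ u t / v t, fun t ↦ ?_, by simp [hu0, hv0], fun t ↦ ?_⟩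
  · rw [mem_ball_zero_iff, norm_div]
    exact (div_lt_one (hpos t)).2 (hlt t)
  · have hvt : v t ≠ 0 := norm_pos_iff.1 (hpos t)
    refine ((hu t).div (hv t) hvt).congr_deriv ?_
    simp only [diskAutGenerator]
    field_simp
    ring

lemma hasDerivAt_schwarzPick_defect {x y : ℝ → ℂ} {z x' y' : ℂ} (hx0 : x 0 = z) (hy0 : y 0 = 0)
    (hx : HasDerivAt x x' 0) (hy : HasDerivAt y y' 0) :
    HasDerivAt (fun t ↦ ‖x t - y t‖ ^ 2 - ‖z‖ ^ 2 * ‖1 - conj (y t) * x t‖ ^ 2)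
      (2 * (conj z * (x' - y' + conj y' * z ^ 2)).re) 0 := by
  have hconj : HasDerivAt (fun t ↦ conj (y t)) (conj y') 0 := hy.star
  refine ((hx.sub hy).norm_sq.sub
    (((hconj.mul hx).const_sub 1).norm_sq.const_mul (‖z‖ ^ 2))).congr_deriv ?_
  have hz_sq : ‖z‖ ^ 2 = z.re * z.re + z.im * z.im := by rw [Complex.sq_norm, normSq_apply]
  simp only [Pi.sub_apply, hx0, hy0, sub_zero, Complex.inner, mul_re, sub_re, conj_re, sub_im,
    conj_im, mul_neg, sub_neg_eq_add, Pi.mul_apply, map_zero, zero_mul, add_zero, inner_neg_right,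
    map_one, mul_one, neg_mul, neg_add_rev, pow_two z, add_re, mul_im, add_im]
  linear_combination 2 * (y'.re * z.re + y'.im * z.im) * hz_sq

lemma IsCompleteVectorFieldOn.re_conj_mul_eq_zero {F : ℂ → ℂ}
    (hF : DifferentiableOn ℂ F (ball 0 1)) (hcomplete : IsCompleteVectorFieldOn F (ball 0 1))
    {z : ℂ} (hz : z ∈ ball (0 : ℂ) 1) :
    (conj z * (F z - F 0 + conj (F 0) * z ^ 2)).re = 0 := by
  choose! φ hmem h0 hφ using hcomplete
  have h0mem : (0 : ℂ) ∈ ball (0 : ℂ) 1 := mem_ball_self one_pos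
  have hflow : ∀ t, DifferentiableOn ℂ (fun w ↦ φ w t) (ball 0 1) := fun t w hw ↦ by
    have hball : ∀ᶠ w' in 𝓝 w, w' ∈ ball (0 : ℂ) 1 := isOpen_ball.mem_nhds hw
    exact (differentiableAt_flow isOpen_ball hF (hmem w hw) (hball.mono h0)
      (hball.mono hφ) t).differentiableWithinAt
  have hle : ∀ t, ‖φ z t - φ 0 t‖ ^ 2 - ‖z‖ ^ 2 * ‖1 - conj (φ 0 t) * φ z t‖ ^ 2 ≤ 0 := fun t ↦ by
    rw [sub_nonpos, ← mul_pow]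
    gcongr
    exact norm_sub_le_norm_mul_norm_one_sub_conj_mul (hflow t) (fun w hw ↦ hmem w hw t) hz
  have hmax : IsLocalMax
      (fun t ↦ ‖φ z t - φ 0 t‖ ^ 2 - ‖z‖ ^ 2 * ‖1 - conj (φ 0 t) * φ z t‖ ^ 2) 0 :=
    .of_forall fun t ↦ (hle t).trans_eq (by simp [h0 z hz, h0 0 h0mem])
  have hderiv := hmax.hasDerivAt_eq_zero
    (hasDerivAt_schwarzPick_defect (h0 z hz) (h0 0 h0mem) (hφ z hz 0) (hφ 0 h0mem 0))
  simpa [h0 z hz, h0 0 h0mem] using hderiv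

theorem isCompleteVectorFieldOn_ball_iff {F : ℂ → ℂ} (hF : DifferentiableOn ℂ F (ball 0 1)) :
    IsCompleteVectorFieldOn F (ball 0 1) ↔
      ∃ (a : ℂ) (b : ℝ), EqOn F (diskAutGenerator a b) (ball 0 1) := by
  constructor
  · intro hcomplete
    obtain ⟨b, hb⟩ := exists_eq_I_mul_of_re_conj_mul_eq_zero isOpen_ball
      (convex_ball (0 : ℂ) 1).isPreconnected (mem_ball_self one_pos)
      (H := fun z ↦ F z - F 0 + conj (F 0) * z ^ 2) ((hF.sub_const _).add (by fun_prop)) (by simp)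
      (fun z hz ↦ hcomplete.re_conj_mul_eq_zero hF hz)
    exact ⟨F 0, b, fun z hz ↦ by simp only [diskAutGenerator]; linear_combination hb z hz⟩
  · rintro ⟨a, b, hab⟩
    exact (isCompleteVectorFieldOn_diskAutGenerator a b).congr hab.symm

end UnitDisk

theorem stmt_3_general {G : ℂ → ℂ} (hG : DifferentiableOn ℂ G (ball 0 1)) {k₀ : ℝ}
    (hcomplete : IsCompleteVectorFieldOn (fun z ↦ G z - I * k₀ * z) (ball 0 1)) (k : ℝ) :
    IsCompleteVectorFieldOn (fun z ↦ G z - I * k * z) (ball 0 1) := by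
  have hdiff : ∀ r : ℝ, DifferentiableOn ℂ (fun z ↦ G z - I * r * z) (ball 0 1) := fun r ↦
    hG.fun_sub (by fun_prop)
  obtain ⟨a, b, hab⟩ := (isCompleteVectorFieldOn_ball_iff (hdiff k₀)).1 hcomplete
  refine (isCompleteVectorFieldOn_ball_iff (hdiff k)).2 ⟨a, b + k₀ - k, fun z hz ↦ ?_⟩
  have habz := hab hz
  simp only [diskAutGenerator] at habz ⊢
  push_cast
  linear_combination habz

/-- if the vector field `(1-z)² p̃(z) - ik₀ z` is complete in the unit
disk for some `k₀ ∈ ℝ` (i.e. the generated semigroup consists of automorphisms),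
then `(1-z)² p̃(z) - ik z` is complete in the unit disk for every `k ∈ ℝ`. -/
theorem stmt_3 (p : ℂ → ℂ)
    (hol : DifferentiableOn ℂ p (ball (0 : ℂ) 1))
    (hre : ∀ z ∈ ball (0 : ℂ) 1, 0 ≤ (p z).re)
    (k₀ : ℝ)
    (hcomplete : ∀ z ∈ ball (0 : ℂ) 1, ∃ x : ℝ → ℂ,
      (∀ t : ℝ, x t ∈ ball (0 : ℂ) 1) ∧ x 0 = z ∧
      (∀ t : ℝ, HasDerivAt x ((1 - x t) ^ 2 * p (x t) - Complex.I * k₀ * x t) t)) :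
    ∀ k : ℝ, ∀ z ∈ ball (0 : ℂ) 1, ∃ x : ℝ → ℂ,
      (∀ t : ℝ, x t ∈ ball (0 : ℂ) 1) ∧ x 0 = z ∧
      (∀ t : ℝ, HasDerivAt x ((1 - x t) ^ 2 * p (x t) - Complex.I * k * x t) t) := by
  exact stmt_3_general (G := fun z ↦ (1 - z) ^ 2 * p z) (.mul (by fun_prop) hol) hcomplete
end

section
/- Let p̃ : 𝔻 → ℂ be holomorphic, continuous on the closed disk 𝔻̄, with Re p̃(z) > ε for some ε > 0 and all z ∈ 𝔻̄. Then for every k ∈ ℝ with k ≠ 0 there exists z₀ ∈ 𝔻 (i.e., |z₀| < 1) such that (1 − z₀)² p̃(z₀) = i k z₀. -/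
open Complex Metric

/-!
If a holomorphic vector field `f` points into a disk along the boundary and has no zero, then
`g z = (z - c) / f z` has nonpositive real part on the boundary circle, hence on the whole disk,
while `g c = 0`. So `Re g` is maximal at the center, which forces `g' c = 0`, contradicting
`g' c = 1 / f c`. On the unit circle `conj z * (1 - z) ^ 2 = -‖1 - z‖ ^ 2`, so
`(1 - z) ^ 2 * p z - a * z` points inwards there when `0 ≤ Re a`; it cannot vanish on the circle
except possibly at `z = 1`, where it equals `-a`.
-/

open Bornology
open scoped ComplexConjugate InnerProductSpace

section RealPart

variable {E : Type*} [NormedAddCommGroup E] [NormedSpace ℂ E]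

theorem re_le_of_forall_mem_frontier_re_le [Nontrivial E] {f : E → ℂ} {U : Set E} {C : ℝ}
    (hU : IsBounded U) (hf : DiffContOnCl ℂ f U) (hC : ∀ z ∈ frontier U, (f z).re ≤ C)
    {z : E} (hz : z ∈ closure U) : (f z).re ≤ C := by
  have hexp : DiffContOnCl ℂ (fun w => exp (f w)) U := differentiable_exp.comp_diffContOnCl hf
  have hnorm : ‖exp (f z)‖ ≤ Real.exp C :=
    norm_le_of_forall_mem_frontier_norm_le hU hexp
      (fun w hw => by simpa only [norm_exp, Real.exp_le_exp] using hC w hw) hz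
  simpa only [norm_exp, Real.exp_le_exp] using hnorm

theorem eq_zero_of_hasFDerivAt_of_isLocalMax_re {f : E → ℂ} {f' : E →L[ℂ] ℂ} {c : E}
    (hf : HasFDerivAt f f' c) (hmax : IsLocalMax (fun z => (f z).re) c) : f' = 0 := by
  have hre : ∀ v, (f' v).re = 0 := fun v => DFunLike.congr_fun
    (hmax.hasFDerivAt_eq_zero (reCLM.hasFDerivAt.comp c (hf.restrictScalars ℝ))) v
  ext v
  apply Complex.ext
  · exact hre v
  · simpa using hre (I • v)

end RealPart

theorem re_div_nonpos_of_inner_nonpos {w z : ℂ} (h : ⟪w, z⟫_ℝ ≤ 0) : (w / z).re ≤ 0 := by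
  have hdiv : (w / z).re = ⟪w, z⟫_ℝ / normSq z := by
    simp only [div_re, Complex.inner, mul_re, conj_re, conj_im]
    ring
  rw [hdiv]
  exact div_nonpos_of_nonpos_of_nonneg h (normSq_nonneg z)

theorem hasDerivAt_sub_div {𝕜 : Type*} [NontriviallyNormedField 𝕜] {f : 𝕜 → 𝕜} {c : 𝕜}
    (hf : ContinuousAt f c) (hc : f c ≠ 0) : HasDerivAt (fun z => (z - c) / f z) (f c)⁻¹ c := by
  rw [hasDerivAt_iff_tendsto_slope]
  refine ((hf.inv₀ hc).tendsto.mono_left nhdsWithin_le_nhds).congr' ?_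
  filter_upwards [self_mem_nhdsWithin] with z hz
  have hzc : z - c ≠ 0 := sub_ne_zero.mpr hz
  rw [slope_def_field, sub_self, zero_div, sub_zero, div_right_comm, div_self hzc, one_div,
    Pi.inv_apply]

theorem exists_mem_ball_eq_zero_of_inner_nonpos {f : ℂ → ℂ} {c : ℂ} {R : ℝ} (hR : 0 < R)
    (hf : DiffContOnCl ℂ f (ball c R)) (hne : ∀ z ∈ sphere c R, f z ≠ 0)
    (hin : ∀ z ∈ sphere c R, ⟪z - c, f z⟫_ℝ ≤ 0) :
    ∃ z ∈ ball c R, f z = 0 := by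
  by_contra! hball
  have hclosed : ∀ z ∈ closure (ball c R), f z ≠ 0 := by
    rw [closure_ball c hR.ne', ← ball_union_sphere]
    rintro z (hz | hz)
    exacts [hball z hz, hne z hz]
  have hg : DiffContOnCl ℂ (fun z => (z - c) / f z) (ball c R) :=
    (differentiable_id.sub_const c).diffContOnCl.smul (hf.inv hclosed)
  have hre : ∀ z ∈ closure (ball c R), ((z - c) / f z).re ≤ 0 := fun z hz =>
    re_le_of_forall_mem_frontier_re_le isBounded_ball hg
      (fun w hw => re_div_nonpos_of_inner_nonpos (hin w (frontier_ball_subset_sphere hw))) hz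
  have hmax : IsLocalMax (fun z => ((z - c) / f z).re) c := by
    filter_upwards [ball_mem_nhds c hR] with z hz
    simpa using hre z (subset_closure hz)
  have hc : f c ≠ 0 := hball c (mem_ball_self hR)
  have hderiv : HasDerivAt (fun z => (z - c) / f z) (f c)⁻¹ c :=
    hasDerivAt_sub_div (hf.differentiableAt isOpen_ball (mem_ball_self hR)).continuousAt hc
  have hzero := eq_zero_of_hasFDerivAt_of_isLocalMax_re hderiv.hasFDerivAt hmax
  exact inv_ne_zero hc (by simpa using DFunLike.congr_fun hzero 1)

theorem inner_one_sub_sq_mul_of_norm_eq_one {z : ℂ} (hz : ‖z‖ = 1) (w : ℂ) :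
    ⟪z, (1 - z) ^ 2 * w⟫_ℝ = -(‖1 - z‖ ^ 2 * w.re) := by
  have hzz : z * conj z = 1 := by simp [mul_conj', hz]
  have hsq : (1 - z) ^ 2 * conj z = (-‖1 - z‖ ^ 2 : ℝ) :=
    calc (1 - z) ^ 2 * conj z = -((1 - z) * conj (1 - z)) := by
          simp only [map_sub, map_one]
          linear_combination (z - 1) * hzz
      _ = (-‖1 - z‖ ^ 2 : ℝ) := by rw [mul_conj', ofReal_neg, ofReal_pow]
  rw [Complex.inner, mul_right_comm, hsq, re_ofReal_mul, neg_mul]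

theorem inner_self_mul_of_norm_eq_one {z : ℂ} (hz : ‖z‖ = 1) (a : ℂ) : ⟪z, a * z⟫_ℝ = a.re := by
  rw [Complex.inner, mul_assoc, mul_conj', hz]
  simp

theorem stmt_6_general {p : ℂ → ℂ} (hp : DiffContOnCl ℂ p (ball 0 1))
    (hre : ∀ z ∈ sphere (0 : ℂ) 1, z ≠ 1 → 0 < (p z).re) {a : ℂ} (ha : a ≠ 0) (ha_re : 0 ≤ a.re) :
    ∃ z ∈ ball (0 : ℂ) 1, (1 - z) ^ 2 * p z = a * z := by
  have hinner : ∀ z ∈ sphere (0 : ℂ) 1,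
      ⟪z, (1 - z) ^ 2 * p z - a * z⟫_ℝ = -(‖1 - z‖ ^ 2 * (p z).re) - a.re := by
    intro z hz
    have hz1 : ‖z‖ = 1 := mem_sphere_zero_iff_norm.mp hz
    rw [inner_sub_right, inner_one_sub_sq_mul_of_norm_eq_one hz1,
      inner_self_mul_of_norm_eq_one hz1]
  have hpos : ∀ z ∈ sphere (0 : ℂ) 1, z ≠ 1 → 0 < ‖1 - z‖ ^ 2 * (p z).re := fun z hz hz1 =>
    mul_pos (pow_pos (norm_pos_iff.mpr (sub_ne_zero.mpr hz1.symm)) 2) (hre z hz hz1)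
  have hdiff : DiffContOnCl ℂ (fun z => (1 - z) ^ 2 * p z - a * z) (ball 0 1) :=
    ((by fun_prop : Differentiable ℂ fun z : ℂ => (1 - z) ^ 2).diffContOnCl.smul hp).sub
      (differentiable_id.const_mul a).diffContOnCl
  simp only [← sub_eq_zero (b := a * _)]
  refine exists_mem_ball_eq_zero_of_inner_nonpos one_pos hdiff ?_ ?_
  · intro z hz hzero
    rcases eq_or_ne z 1 with rfl | hz1
    · exact ha (by simpa using hzero)
    · have hinner_zero := hinner z hz
      rw [hzero, inner_zero_right] at hinner_zero
      linarith [hpos z hz hz1]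
  · intro z hz
    rw [sub_zero, hinner z hz]
    rcases eq_or_ne z 1 with rfl | hz1
    · simpa using ha_re
    · linarith [hpos z hz hz1]

/-- if `p̃` is holomorphic on the unit disk, continuous on the closed
disk, with `Re p̃ > ε > 0` on the closed disk, then for every `k ≠ 0` the generator
`(1-z)² p̃(z) - ikz` has a zero inside the unit disk, i.e. there is `z₀`, `|z₀| < 1`,
with `(1 - z₀)² p̃(z₀) = i k z₀`. -/
theorem stmt_6 (p : ℂ → ℂ) (ε : ℝ) (hε : 0 < ε)
    (hol : DifferentiableOn ℂ p (ball (0 : ℂ) 1))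
    (hcont : ContinuousOn p (closedBall (0 : ℂ) 1))
    (hre : ∀ z ∈ closedBall (0 : ℂ) 1, ε < (p z).re)
    (k : ℝ) (hk : k ≠ 0) :
    ∃ z₀ : ℂ, ‖z₀‖ < 1 ∧
      (1 - z₀) ^ 2 * p z₀ = Complex.I * k * z₀ := by
  simpa using stmt_6_general (a := I * k) ⟨hol, by rwa [closure_ball _ one_ne_zero]⟩
    (fun z hz _ => hε.trans (hre z (sphere_subset_closedBall hz))) (by simpa using hk) (by simp)
end

section
/- Let p̃ : 𝔻 → ℂ be holomorphic, continuous on the closed disk 𝔻̄, with Re p̃(z) ≥ 0 on 𝔻̄, and let k ∈ ℝ, k ≠ 0. Suppose the Euclidean distance between the set p̃(𝕋) (the image of the unit circle 𝕋 = {z : |z| = 1} under p̃) and the set K_k(𝕋) = {−iks : s ≥ 1/4} (the image of 𝕋 under K_k(z) = ikz/(1−z)², a ray on the imaginary axis from ik/... through ∞; explicitly {ikr : r ≤ −1/4}) is greater than some ε > 0. Then there exists z₀ ∈ 𝔻 with (1 − z₀)² p̃(z₀) = i k z₀. -/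
open Complex Metric

/-!
Write `c = I * k`. The map `w ↦ 1 + 4 * w / c` turns the ray `{c * r | r ≤ -1/4}` into the slit
`(-∞, 0]`, and turns `c * z / (1 - z) ^ 2` into `((1 + z) / (1 - z)) ^ 2`. If `q = 1 + 4 * p / c`
avoids the slit on the unit circle `𝕋`, it avoids it on the closed disk: the topological boundary of
the compact set `q (𝔻̄)` lies in `q (𝕋)`, while the slit is connected and unbounded. Hence `s = √q`
is holomorphic with positive real part, and the zeros of the generator are the solutions of
`z * (s z + 1) = s z - 1`. Since `|s - 1| < |s + 1|` on `𝕋`, Rouché's theorem provides one.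
-/

open Set Bornology
open scoped ComplexOrder

section MaximumModulus

variable {E : Type*} [NormedAddCommGroup E] [NormedSpace ℂ E] [Nontrivial E]
  {U : Set E} {f g : E → ℂ}

lemma le_norm_of_forall_mem_frontier_le_norm {c : ℝ} (hU : IsBounded U)
    (hf : DiffContOnCl ℂ f U) (hf₀ : ∀ z ∈ closure U, f z ≠ 0)
    (hfc : ∀ z ∈ frontier U, c ≤ ‖f z‖) {z : E} (hz : z ∈ closure U) : c ≤ ‖f z‖ := by
  obtain hc | hc := le_or_gt c 0
  · exact hc.trans (norm_nonneg _)
  have hinv : ‖f⁻¹ z‖ ≤ c⁻¹ :=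
    norm_le_of_forall_mem_frontier_norm_le hU (hf.inv hf₀)
      (fun w hw ↦ by simpa only [Pi.inv_apply, norm_inv] using inv_anti₀ hc (hfc w hw)) hz
  rw [Pi.inv_apply, norm_inv] at hinv
  exact (inv_le_inv₀ (norm_pos_iff.2 (hf₀ z hz)) hc).1 hinv

lemma frontier_image_closure_subset [ProperSpace E] (hU : IsBounded U) (hf : DiffContOnCl ℂ f U) :
    frontier (f '' closure U) ⊆ f '' frontier U := by
  intro x hx
  have hclosed : IsClosed (f '' closure U) :=
    (hU.isCompact_closure.image_of_continuousOn hf.continuousOn).isClosed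
  have hfrontier : IsClosed (f '' frontier U) :=
    ((hU.isCompact_closure.of_isClosed_subset isClosed_frontier
      frontier_subset_closure).image_of_continuousOn
        (hf.continuousOn.mono frontier_subset_closure)).isClosed
  by_contra hxf
  obtain ⟨ε, hε, hball⟩ := Metric.isOpen_iff.1 hfrontier.isOpen_compl x hxf
  obtain ⟨w, hw, hxw⟩ : ∃ w ∈ (f '' closure U)ᶜ, dist x w < ε / 2 :=
    Metric.mem_closure_iff.1 (frontier_eq_closure_inter_closure.subset hx).2 _ (half_pos hε)
  obtain ⟨z, hz, rfl⟩ := hclosed.frontier_subset hx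
  have hfar : ∀ y ∈ frontier U, ε / 2 ≤ ‖f y - w‖ := by
    intro y hy
    have hy' : ε ≤ dist (f y) (f z) :=
      not_lt.1 fun hlt ↦ hball hlt (mem_image_of_mem f hy)
    rw [← dist_eq_norm]
    linarith [dist_triangle_right (f y) (f z) w, dist_comm (f z) w]
  have hnear : ε / 2 ≤ ‖f z - w‖ :=
    le_norm_of_forall_mem_frontier_le_norm hU (hf.sub_const w)
      (fun y hy hyw ↦ hw ⟨y, hy, sub_eq_zero.1 hyw⟩) hfar hz
  exact hnear.not_gt (by rwa [← dist_eq_norm])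

lemma disjoint_image_closure_of_disjoint_image_frontier [ProperSpace E] {S : Set ℂ}
    (hU : IsBounded U) (hf : DiffContOnCl ℂ f U) (hS : IsPreconnected S) (hS' : ¬IsBounded S)
    (hd : Disjoint S (f '' frontier U)) : Disjoint S (f '' closure U) := by
  have hcompact : IsCompact (f '' closure U) :=
    hU.isCompact_closure.image_of_continuousOn hf.continuousOn
  have hmeets : (S ∩ (f '' closure U)ᶜ).Nonempty :=
    inter_compl_nonempty_iff.2 fun h ↦ hS' (hcompact.isBounded.subset h)
  refine subset_compl_iff_disjoint_right.1
    (hS.subset_of_closure_inter_subset hcompact.isClosed.isOpen_compl hmeets ?_)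
  rintro x ⟨hxc, hxS⟩ hx
  exact disjoint_left.1 hd hxS (frontier_image_closure_subset hU hf
    (frontier_eq_closure_inter_closure.superset ⟨subset_closure hx, hxc⟩))

lemma mapsTo_slitPlane_closure [ProperSpace E] (hU : IsBounded U) (hf : DiffContOnCl ℂ f U)
    (hfU : MapsTo f (frontier U) slitPlane) : MapsTo f (closure U) slitPlane := by
  have hunbounded : ¬IsBounded (Iic (0 : ℂ)) := by
    intro hb
    obtain ⟨C, hC⟩ := isBounded_iff_forall_norm_le.1 hb
    have hC' := hC (-((|C| + 1 : ℝ) : ℂ)) (by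
      rw [mem_Iic, ← ofReal_neg, ← ofReal_zero, real_le_real]
      linarith [abs_nonneg C])
    rw [norm_neg, norm_real, Real.norm_eq_abs, abs_of_nonneg (by positivity)] at hC'
    linarith [le_abs_self C]
  rw [← Complex.compl_Iic_zero, mapsTo_iff_image_subset, subset_compl_iff_disjoint_left] at hfU ⊢
  exact disjoint_image_closure_of_disjoint_image_frontier hU hf
    (convex_Iic (𝕜 := ℝ) (0 : ℂ)).isPreconnected hunbounded hfU

lemma half_le_re_div_sub {a b : ℂ} (h : ‖b‖ < ‖a‖) : 1 / 2 ≤ (a / (a - b)).re := by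
  have hab : 0 < normSq (a - b) := normSq_pos.2 (sub_ne_zero.2 fun hab ↦ h.ne (by rw [hab]))
  have hsq : normSq b ≤ normSq a := by
    simpa only [normSq_eq_norm_sq] using pow_le_pow_left₀ (norm_nonneg b) h.le 2
  rw [div_re, ← add_div, le_div_iff₀ hab]
  simp only [normSq_apply, sub_re, sub_im] at hsq ⊢
  linarith

-- If `f - g` had no zero, `exp (-f / (f - g))` would have modulus at most `exp (-1/2)` on the
-- frontier, but it takes the value `1` at the zero of `f`.
lemma exists_mem_eq_of_norm_lt_on_frontier (hU : IsBounded U) (hf : DiffContOnCl ℂ f U)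
    (hg : DiffContOnCl ℂ g U) (hlt : ∀ z ∈ frontier U, ‖g z‖ < ‖f z‖) (hf₀ : ∃ z ∈ U, f z = 0) :
    ∃ z ∈ U, f z = g z := by
  by_contra! hne
  obtain ⟨z₀, hz₀, hfz₀⟩ := hf₀
  have hsub : ∀ z ∈ closure U, f z - g z ≠ 0 := by
    intro z hz
    rw [closure_eq_self_union_frontier] at hz
    rcases hz with hzU | hzU
    · exact sub_ne_zero.2 (hne z hzU)
    · exact sub_ne_zero.2 fun h ↦ (hlt z hzU).ne (by rw [h])
  have hexp : DiffContOnCl ℂ (fun z ↦ exp (-(f z / (f z - g z)))) U := by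
    simp only [div_eq_mul_inv]
    exact differentiable_exp.comp_diffContOnCl (hf.smul ((hf.sub hg).inv hsub)).neg
  have hbound : ‖exp (-(f z₀ / (f z₀ - g z₀)))‖ ≤ Real.exp (-(1 / 2)) := by
    refine norm_le_of_forall_mem_frontier_norm_le hU hexp (fun z hz ↦ ?_) (subset_closure hz₀)
    rw [norm_exp, Real.exp_le_exp, neg_re, neg_le_neg_iff]
    exact half_le_re_div_sub (hlt z hz)
  rw [hfz₀, zero_div, neg_zero, exp_zero, norm_one, Real.one_le_exp_iff] at hbound
  norm_num at hbound

end MaximumModulus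

lemma re_sqrt_pos {z : ℂ} (hz : z ∈ slitPlane) : 0 < (Complex.sqrt z).re := by
  have hlt : -z.re < ‖z‖ :=
    ((neg_le_abs z.re).trans (abs_re_le_norm z)).lt_of_ne
      (neg_re_eq_norm.not.2 (mem_slitPlane_iff_not_le_zero.1 hz))
  rw [Complex.sqrt, cpow_inv_two_re, Real.sqrt_pos]
  linarith

lemma diffContOnCl_sqrt_comp {E : Type*} [NormedAddCommGroup E] [NormedSpace ℂ E] {U : Set E}
    {f : E → ℂ} (hf : DiffContOnCl ℂ f U) (hfU : MapsTo f (closure U) slitPlane) :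
    DiffContOnCl ℂ (fun z ↦ Complex.sqrt (f z)) U :=
  ⟨hf.differentiableOn.cpow_const fun _ hz ↦ hfU (subset_closure hz),
    hf.continuousOn.cpow_const fun _ hz ↦ hfU hz⟩

lemma norm_sub_one_lt_norm_add_one {s : ℂ} (hs : 0 < s.re) : ‖s - 1‖ < ‖s + 1‖ := by
  refine lt_of_pow_lt_pow_left₀ 2 (norm_nonneg _) ?_
  simp only [← normSq_eq_norm_sq, normSq_apply, sub_re, add_re, sub_im, add_im, one_re, one_im]
  linarith

lemma exists_mem_ball_one_sub_sq_mul_eq_one_add_sq {q : ℂ → ℂ}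
    (hq : DiffContOnCl ℂ q (ball 0 1)) (hqs : MapsTo q (sphere 0 1) slitPlane) :
    ∃ z ∈ ball (0 : ℂ) 1, (1 - z) ^ 2 * q z = (1 + z) ^ 2 := by
  rw [← frontier_ball (0 : ℂ) one_ne_zero] at hqs
  set s : ℂ → ℂ := fun z ↦ Complex.sqrt (q z)
  have hs : DiffContOnCl ℂ s (ball 0 1) :=
    diffContOnCl_sqrt_comp hq (mapsTo_slitPlane_closure isBounded_ball hq hqs)
  have hlt : ∀ z ∈ frontier (ball (0 : ℂ) 1), ‖s z - 1‖ < ‖z * (s z + 1)‖ := by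
    intro z hz
    have hz₁ : ‖z‖ = 1 := by simpa [frontier_ball (0 : ℂ) one_ne_zero] using hz
    rw [norm_mul, hz₁, one_mul]
    exact norm_sub_one_lt_norm_add_one (re_sqrt_pos (hqs hz))
  obtain ⟨z, hz, hzs⟩ : ∃ z ∈ ball (0 : ℂ) 1, z * (s z + 1) = s z - 1 :=
    exists_mem_eq_of_norm_lt_on_frontier isBounded_ball
      (differentiable_id.diffContOnCl.smul (hs.add_const 1)) (hs.sub_const 1) hlt
      ⟨0, mem_ball_self one_pos, zero_mul _⟩
  have hsq : s z ^ 2 = q z := cpow_ofNat_inv_pow (q z) 2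
  have hroot : (1 - z) * s z = 1 + z := by linear_combination -hzs
  exact ⟨z, hz, by rw [← hsq, ← mul_pow, hroot]⟩

theorem stmt_7_general (p : ℂ → ℂ) (c : ℂ) (hc : c ≠ 0) (hp : DiffContOnCl ℂ p (ball 0 1))
    (hray : ∀ z : ℂ, ‖z‖ = 1 → ∀ r : ℝ, r ≤ -(1 / 4) → p z ≠ c * r) :
    ∃ z₀ : ℂ, ‖z₀‖ < 1 ∧ (1 - z₀) ^ 2 * p z₀ = c * z₀ := by
  set q : ℂ → ℂ := fun z ↦ 4 / c * p z + 1
  have hcq (z : ℂ) : c * (q z - 1) = 4 * p z := by simp only [q]; field_simp; ring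
  have hq : DiffContOnCl ℂ q (ball 0 1) := (hp.const_smul (4 / c)).add_const 1
  have hslit : MapsTo q (sphere 0 1) slitPlane := by
    intro z hz
    rw [mem_slitPlane_iff_not_le_zero, RCLike.nonpos_iff_exists_ofReal]
    rintro ⟨x, hx, hxq⟩
    refine hray z (mem_sphere_zero_iff_norm.1 hz) ((x - 1) / 4) (by linarith) ?_
    have hxq' : (x : ℂ) = q z := hxq
    push_cast
    linear_combination (-1 / 4) * hcq z - c / 4 * hxq'
  obtain ⟨z, hz, hzq⟩ := exists_mem_ball_one_sub_sq_mul_eq_one_add_sq hq hslit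
  refine ⟨z, mem_ball_zero_iff.1 hz, ?_⟩
  linear_combination -(1 - z) ^ 2 / 4 * hcq z + c / 4 * hzq

/-- if the Euclidean distance between `p̃(𝕋)` and
`K_k(𝕋) = {ikr : r ≤ -1/4}` (the image of the unit circle under the rotated Koebe
function `K_k(z) = ikz/(1-z)²`) exceeds some `ε > 0`, then the generator
`(1-z)² p̃(z) - ikz` has a zero `z₀` in the open unit disk. -/
theorem stmt_7 (p : ℂ → ℂ) (k : ℝ) (hk : k ≠ 0)
    (hol : DifferentiableOn ℂ p (ball (0 : ℂ) 1))
    (hcont : ContinuousOn p (closedBall (0 : ℂ) 1))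
    (hre : ∀ z ∈ closedBall (0 : ℂ) 1, 0 ≤ (p z).re)
    (hdist : ∃ ε : ℝ, 0 < ε ∧ ∀ z : ℂ, ‖z‖ = 1 →
      ∀ r : ℝ, r ≤ -(1 / 4) → ε < dist (p z) (Complex.I * k * r)) :
    ∃ z₀ : ℂ, ‖z₀‖ < 1 ∧
      (1 - z₀) ^ 2 * p z₀ = Complex.I * k * z₀ := by
  obtain ⟨ε, hε, hεd⟩ := hdist
  exact stmt_7_general p (I * k) (mul_ne_zero I_ne_zero (ofReal_ne_zero.2 hk)) (.mk_ball hol hcont)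
    fun z hz r hr ↦ dist_pos.1 (hε.trans (hεd z hz r hr))
end

section
/- Let p̃ : 𝔻 → ℂ be holomorphic with Re p̃(z) ≥ 0 for all z ∈ 𝔻. Then for every ε with 0 < ε < 1 there exists k₀ > 0 such that for all real k with |k| > k₀ there is a unique z₀ with |z₀| ≤ ε satisfying (1 − z₀)² p̃(z₀) = i k z₀. In particular, for |k| > k₀ the semigroup generated by (1−z)²p̃(z) − ikz is elliptic and its Denjoy–Wolff point lies within distance ε of the origin. -/
open Complex Metric

/-! With `f z = (1 - z)² p z` and `c = ik`, the equation `f z = c z` says that `z` is a fixed point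
of `c⁻¹ • f`. A holomorphic `f` is Lipschitz on the closed disk of radius `ε < 1`, so for large
`‖c‖` the map `c⁻¹ • f` contracts that disk into itself, and the Banach fixed point theorem
applies. -/

open Function Set
open scoped NNReal

theorem existsUnique_isFixedPt_of_lipschitzOnWith {α : Type*} [MetricSpace α] {s : Set α}
    {f : α → α} {K : ℝ≥0} (hs : IsComplete s) (hne : s.Nonempty) (hmaps : MapsTo f s s)
    (hK : K < 1) (hf : LipschitzOnWith K f s) : ∃! x, x ∈ s ∧ IsFixedPt f x := by
  have hcontr : ContractingWith K (hmaps.restrict f s s) := ⟨hK, hf.mapsToRestrict hmaps⟩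
  obtain ⟨x₀, hx₀⟩ := hne
  obtain ⟨x, hx, hfix, -⟩ := hcontr.exists_fixedPoint' hs hmaps hx₀ (edist_ne_top _ _)
  refine ⟨x, ⟨hx, hfix⟩, fun y ⟨hy, hyfix⟩ => ?_⟩
  exact congrArg Subtype.val <| hcontr.fixedPoint_unique' (x := ⟨y, hy⟩) (y := ⟨x, hx⟩)
    (Subtype.ext hyfix) (Subtype.ext hfix)

section LargeScalar

variable {𝕜 E : Type*} [NormedField 𝕜] [NormedAddCommGroup E] [NormedSpace 𝕜 E]
  {f : E → E} {K : ℝ≥0} {r : ℝ} {c : 𝕜}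

theorem mapsTo_inv_smul_closedBall_of_lipschitzOnWith (hr : 0 < r)
    (hf : LipschitzOnWith K f (closedBall 0 r)) (hc : K + ‖f 0‖ / r ≤ ‖c‖) :
    MapsTo (fun z => c⁻¹ • f z) (closedBall 0 r) (closedBall 0 r) := by
  intro z hz
  rw [mem_closedBall_zero_iff] at hz ⊢
  rw [norm_smul, norm_inv]
  refine inv_mul_le_of_le_mul₀ (norm_nonneg c) hr.le ?_
  have hlip : ‖f z - f 0‖ ≤ K * ‖z‖ := by
    simpa only [sub_zero] using
      hf.norm_sub_le (mem_closedBall_zero_iff.2 hz) (mem_closedBall_self hr.le)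
  calc ‖f z‖ ≤ ‖f z - f 0‖ + ‖f 0‖ := norm_le_norm_sub_add _ _
    _ ≤ K * ‖z‖ + ‖f 0‖ := by gcongr
    _ ≤ K * r + ‖f 0‖ := by gcongr
    _ = (K + ‖f 0‖ / r) * r := by field_simp
    _ ≤ ‖c‖ * r := by gcongr

theorem existsUnique_eq_smul_of_lipschitzOnWith [CompleteSpace E] (hr : 0 < r)
    (hf : LipschitzOnWith K f (closedBall 0 r)) (hc : K + ‖f 0‖ / r < ‖c‖) :
    ∃! z, ‖z‖ ≤ r ∧ f z = c • z := by
  have hKc : (K : ℝ) < ‖c‖ := lt_of_le_of_lt (le_add_of_nonneg_right (by positivity)) hc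
  have hc₀ : c ≠ 0 := norm_pos_iff.1 (K.coe_nonneg.trans_lt hKc)
  have hratio : ‖c⁻¹‖₊ * K < 1 := by
    rw [nnnorm_inv, inv_mul_lt_one₀ (nnnorm_pos.2 hc₀)]
    exact hKc
  have hlip : LipschitzOnWith (‖c⁻¹‖₊ * K) (fun z => c⁻¹ • f z) (closedBall 0 r) :=
    (lipschitzWith_smul c⁻¹).comp_lipschitzOnWith hf
  have hfix := existsUnique_isFixedPt_of_lipschitzOnWith isClosed_closedBall.isComplete
    (nonempty_closedBall.2 hr.le) (mapsTo_inv_smul_closedBall_of_lipschitzOnWith hr hf hc.le)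
    hratio hlip
  simpa only [mem_closedBall_zero_iff, IsFixedPt, inv_smul_eq_iff₀ hc₀] using hfix

end LargeScalar

theorem stmt_8_general {p : ℂ → ℂ} (hol : DifferentiableOn ℂ p (ball 0 1)) {ε : ℝ}
    (hε : 0 < ε) (hε₁ : ε < 1) :
    ∃ k₀ : ℝ, 0 < k₀ ∧ ∀ c : ℂ, k₀ < ‖c‖ → ∃! z : ℂ, ‖z‖ ≤ ε ∧ (1 - z) ^ 2 * p z = c * z := by
  have hf : DifferentiableOn ℂ (fun z => (1 - z) ^ 2 * p z) (ball 0 1) :=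
    DifferentiableOn.mul (by fun_prop) hol
  have hC1 : ContDiffOn ℝ 1 (fun z => (1 - z) ^ 2 * p z) (closedBall 0 ε) :=
    ((hf.contDiffOn isOpen_ball).restrict_scalars ℝ).mono (closedBall_subset_ball hε₁)
  obtain ⟨K, hK⟩ := hC1.exists_lipschitzOnWith one_ne_zero
    (convex_closedBall 0 ε) (isCompact_closedBall 0 ε)
  refine ⟨K + ‖p 0‖ / ε + 1, by positivity, fun c hc => ?_⟩
  have hc' : K + ‖(1 - 0) ^ 2 * p 0‖ / ε < ‖c‖ := by simpa using (lt_add_one _).trans hc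
  exact existsUnique_eq_smul_of_lipschitzOnWith hε hK hc'

/-- for every `0 < ε < 1` there is `k₀ > 0` such that for all real `k`
with `|k| > k₀` the generator `(1-z)² p̃(z) - ikz` has a unique zero `z₀` with
`|z₀| ≤ ε`; in particular the generated semigroup is elliptic and its
Denjoy–Wolff point lies within distance `ε` of the origin. -/
theorem stmt_8 (p : ℂ → ℂ)
    (hol : DifferentiableOn ℂ p (ball (0 : ℂ) 1))
    (hre : ∀ z ∈ ball (0 : ℂ) 1, 0 ≤ (p z).re) :
    ∀ ε : ℝ, 0 < ε → ε < 1 → ∃ k₀ : ℝ, 0 < k₀ ∧ ∀ k : ℝ, k₀ < |k| →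
      ∃! z₀ : ℂ, ‖z₀‖ ≤ ε ∧
        (1 - z₀) ^ 2 * p z₀ = Complex.I * k * z₀ := by
  intro ε hε hε₁
  obtain ⟨k₀, hk₀, h⟩ := stmt_8_general hol hε hε₁
  exact ⟨k₀, hk₀, fun k hk => h (I * k) (by simpa using hk)⟩
end

section
/- Let p̃ : 𝔻 → ℂ be holomorphic with Re p̃(z) ≥ 0 for all z ∈ 𝔻, let k ∈ ℝ with k ≠ 0, and suppose z₀ ∈ 𝔻 satisfies (1 − z₀)² p̃(z₀) = i k z₀ (so the semigroup generated by (1−z)²p̃(z) − ikz is elliptic with Denjoy–Wolff point z₀). If k > 0 then Im z₀ ≤ 0, and if k < 0 then Im z₀ ≥ 0. Moreover, Im z₀ = 0 holds if and only if p̃ is a constant purely imaginary function, p̃(z) ≡ iB for some B ∈ ℝ. -/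
open Complex Metric

/-!
At a zero `z₀` of the generator, `p̃ z₀ = i k K(z₀)` for the Koebe function `K(z) = z / (1 - z)²`,
so `Re p̃(z₀) = -k Im K(z₀)`. On the disk `Im K(z)` is a positive multiple of `Im z`, and
`Re p̃ ≥ 0` therefore determines the sign of `Im z₀`. Equality means that `Re p̃` attains its
minimum `0` at an interior point, which by the open mapping theorem forces `p̃` to be constant.
-/

section LocalExtr

open Filter Topology

variable {E : Type*} [NormedAddCommGroup E] [NormedSpace ℂ E] {f : E → ℂ} {U : Set E} {z₀ : E}

theorem eventually_eq_of_isLocalExtr_re (hf : AnalyticAt ℂ f z₀)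
    (hextr : IsLocalExtr (fun z ↦ (f z).re) z₀) : ∀ᶠ z in 𝓝 z₀, f z = f z₀ := by
  refine hf.eventually_constant_or_nhds_le_map_nhds.resolve_right fun hopen ↦ ?_
  have hre_open : 𝓝 (f z₀).re ≤ map (fun z ↦ (f z).re) (𝓝 z₀) :=
    (isOpenMap_re.nhds_le (f z₀)).trans (map_mono hopen)
  exact (hextr.on Set.univ).not_nhds_le_map (by rwa [nhdsWithin_univ])

theorem eqOn_const_of_isLocalExtr_re (hf : AnalyticOnNhd ℂ f U) (hU : IsPreconnected U)
    (hz₀ : z₀ ∈ U) (hextr : IsLocalExtr (fun z ↦ (f z).re) z₀) :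
    Set.EqOn f (fun _ ↦ f z₀) U :=
  hf.eqOn_of_preconnected_of_eventuallyEq analyticOnNhd_const hU hz₀
    (eventually_eq_of_isLocalExtr_re (hf z₀ hz₀) hextr)

theorem re_eq_zero_iff_exists_forall_eq_I_mul (hf : AnalyticOnNhd ℂ f U) (hU : IsPreconnected U)
    (hU_open : IsOpen U) (hnonneg : ∀ z ∈ U, 0 ≤ (f z).re) (hz₀ : z₀ ∈ U) :
    (f z₀).re = 0 ↔ ∃ B : ℝ, ∀ z ∈ U, f z = I * B := by
  constructor
  · intro hzero
    have hmin : IsLocalMin (fun z ↦ (f z).re) z₀ := by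
      filter_upwards [hU_open.mem_nhds hz₀] with z hz
      exact hzero.le.trans (hnonneg z hz)
    refine ⟨(f z₀).im, fun z hz ↦ ?_⟩
    rw [eqOn_const_of_isLocalExtr_re hf hU hz₀ hmin.isExtr hz]
    exact Complex.ext (by simp [hzero]) (by simp)
  · rintro ⟨B, hB⟩
    simp [hB z₀ hz₀]

end LocalExtr

/-- The Koebe function. It turns the zeros of the generator into solutions of
`p z = I * k * koebe z`, so that `K_k` is `I * k * koebe`. The value at the pole `1` is the junk
value `0`. -/
noncomputable def koebe (z : ℂ) : ℂ :=
  z / (1 - z) ^ 2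

section Koebe

variable {z : ℂ}

theorem eq_mul_koebe_iff (hz : z ≠ 1) {w c : ℂ} : w = c * koebe z ↔ (1 - z) ^ 2 * w = c * z := by
  have hpole : (1 - z) ^ 2 ≠ 0 := pow_ne_zero 2 (sub_ne_zero.2 hz.symm)
  rw [koebe, ← mul_div_assoc, eq_div_iff hpole, mul_comm]

theorem koebe_im (z : ℂ) :
    (koebe z).im = z.im * ((1 - normSq z) / normSq (1 - z) ^ 2) := by
  have hnum : (z * starRingEnd ℂ ((1 - z) ^ 2)).im = z.im * (1 - normSq z) := by
    simp only [pow_two, map_mul, map_sub, map_one, mul_im, sub_re, one_re, conj_re, sub_im, one_im,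
      conj_im, sub_neg_eq_add, zero_add, mul_re, normSq_apply]
    ring
  rw [koebe, div_eq_mul_inv, inv_def, ← mul_assoc, im_mul_ofReal, hnum, map_pow]
  ring

theorem one_sub_normSq_div_normSq_one_sub_sq_pos (hz : ‖z‖ < 1) :
    0 < (1 - normSq z) / normSq (1 - z) ^ 2 := by
  have hne : z ≠ 1 := ne_of_apply_ne norm (by simpa using hz.ne)
  have hnum : 0 < 1 - normSq z := by
    rw [normSq_eq_norm_sq, sub_pos]
    exact pow_lt_one₀ (norm_nonneg z) hz two_ne_zero
  have hden : 0 < normSq (1 - z) := normSq_pos.2 (sub_ne_zero.2 hne.symm)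
  positivity

theorem koebe_im_nonneg_iff (hz : ‖z‖ < 1) : 0 ≤ (koebe z).im ↔ 0 ≤ z.im := by
  rw [koebe_im, mul_nonneg_iff_of_pos_right (one_sub_normSq_div_normSq_one_sub_sq_pos hz)]

theorem koebe_im_nonpos_iff (hz : ‖z‖ < 1) : (koebe z).im ≤ 0 ↔ z.im ≤ 0 := by
  rw [← not_lt, koebe_im, mul_pos_iff_of_pos_right (one_sub_normSq_div_normSq_one_sub_sq_pos hz),
    not_lt]

theorem koebe_im_eq_zero_iff (hz : ‖z‖ < 1) : (koebe z).im = 0 ↔ z.im = 0 := by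
  rw [koebe_im, mul_eq_zero_iff_right (one_sub_normSq_div_normSq_one_sub_sq_pos hz).ne']

end Koebe

/-- if `z₀ ∈ 𝔻` is a zero of the generator `(1-z)² p̃(z) - ikz`
(`k ≠ 0`), i.e. the Denjoy–Wolff point of the generated elliptic semigroup, then
`Im z₀ ≤ 0` for `k > 0`, `Im z₀ ≥ 0` for `k < 0`, and `Im z₀ = 0` precisely when
`p̃ ≡ iB` for some real constant `B`. -/
theorem stmt_9 (p : ℂ → ℂ)
    (hol : DifferentiableOn ℂ p (ball (0 : ℂ) 1))
    (hre : ∀ z ∈ ball (0 : ℂ) 1, 0 ≤ (p z).re)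
    (k : ℝ) (hk : k ≠ 0)
    (z₀ : ℂ) (hz₀ : z₀ ∈ ball (0 : ℂ) 1)
    (hzero : (1 - z₀) ^ 2 * p z₀ = Complex.I * k * z₀) :
    (0 < k → z₀.im ≤ 0) ∧
    (k < 0 → 0 ≤ z₀.im) ∧
    (z₀.im = 0 ↔ ∃ B : ℝ, ∀ z ∈ ball (0 : ℂ) 1, p z = Complex.I * B) := by
  have hnorm : ‖z₀‖ < 1 := mem_ball_zero_iff.1 hz₀
  have hne : z₀ ≠ 1 := ne_of_apply_ne norm (by simpa using hnorm.ne)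
  have hfixed : p z₀ = I * k * koebe z₀ := (eq_mul_koebe_iff hne).2 hzero
  have hre_eq : (p z₀).re = -(k * (koebe z₀).im) := by simp [hfixed]
  have hsign : k * (koebe z₀).im ≤ 0 := by linarith [hre z₀ hz₀]
  refine ⟨fun hpos ↦ ?_, fun hneg ↦ ?_, ?_⟩
  · exact (koebe_im_nonpos_iff hnorm).1 (nonpos_of_mul_nonpos_right hsign hpos)
  · exact (koebe_im_nonneg_iff hnorm).1 (nonneg_of_mul_nonpos_right hsign hneg)
  · calc
      z₀.im = 0 ↔ (koebe z₀).im = 0 := (koebe_im_eq_zero_iff hnorm).symm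
      _ ↔ (p z₀).re = 0 := by rw [hre_eq, neg_eq_zero, mul_eq_zero_iff_left hk]
      _ ↔ ∃ B : ℝ, ∀ z ∈ ball (0 : ℂ) 1, p z = I * B :=
        re_eq_zero_iff_exists_forall_eq_I_mul (hol.analyticOnNhd isOpen_ball)
          (convex_ball (0 : ℂ) 1).isPreconnected isOpen_ball hre hz₀
end

section
/- For every k ∈ ℝ there exists z ∈ ℂ with |z| = 1 such that (1 − z)³ + i k z (1 + z) = 0. (Equivalently, the equation (1 − e^{iθ})/(1 + e^{iθ}) = i k e^{iθ}/(e^{iθ} − 1)², i.e., tan(θ/2) = k/(2(cos θ − 1)), has a solution θ for every k; thus for the Herglotz function p̃(z) = (1 − z)/(1 + z) the map F(z) = K_k^{-1}(p̃(z)) has a fixed point on the unit circle for every k.) -/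
open Complex

/-!
At `z = exp (t * I) ^ 2` the half-angle factorizations of `1 - z` and `1 + z` turn the equation into
`4 * sin t ^ 3 + k * cos t = 0`, up to a nonvanishing factor. Both terms change sign under
`t ↦ t + π`, so the intermediate value theorem yields a real root `t`.
-/

theorem exists_eq_zero_of_continuous_of_antiperiodic {X R : Type*}
    [TopologicalSpace X] [PreconnectedSpace X] [Nonempty X] [Add X]
    [AddCommGroup R] [LinearOrder R] [IsOrderedAddMonoid R] [TopologicalSpace R]
    [OrderClosedTopology R] {f : X → R} {c : X}
    (hf : Continuous f) (hc : Function.Antiperiodic f c) : ∃ x, f x = 0 := by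
  obtain ⟨x⟩ := ‹Nonempty X›
  rcases le_total (f x) 0 with hx | hx
  · have hxc : 0 ≤ f (x + c) := by rwa [hc x, neg_nonneg]
    exact mem_range_of_exists_le_of_exists_ge hf ⟨x, hx⟩ ⟨x + c, hxc⟩
  · have hxc : f (x + c) ≤ 0 := by rwa [hc x, neg_nonpos]
    exact mem_range_of_exists_le_of_exists_ge hf ⟨x + c, hxc⟩ ⟨x, hx⟩

theorem antiperiodic_mul_sin_pow_three_add_mul_cos (a b : ℝ) :
    Function.Antiperiodic (fun t ↦ a * Real.sin t ^ 3 + b * Real.cos t) Real.pi := by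
  intro t
  simp only [Real.sin_add_pi, Real.cos_add_pi]
  ring

theorem exists_mul_sin_pow_three_add_mul_cos_eq_zero (a b : ℝ) :
    ∃ t : ℝ, a * Real.sin t ^ 3 + b * Real.cos t = 0 :=
  exists_eq_zero_of_continuous_of_antiperiodic (by fun_prop)
    (antiperiodic_mul_sin_pow_three_add_mul_cos a b)

theorem one_sub_exp_mul_I_sq (t : ℂ) :
    1 - exp (t * I) ^ 2 = -2 * I * sin t * exp (t * I) := by
  rw [exp_mul_I]
  linear_combination -sin_sq_add_cos_sq t + sin t ^ 2 * I_sq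

theorem one_add_exp_mul_I_sq (t : ℂ) : 1 + exp (t * I) ^ 2 = 2 * cos t * exp (t * I) := by
  rw [exp_mul_I]
  linear_combination -sin_sq_add_cos_sq t + sin t ^ 2 * I_sq

theorem one_sub_exp_sq_pow_three_add_mul_one_add_exp_sq (k t : ℂ) :
    (1 - exp (t * I) ^ 2) ^ 3 + I * k * exp (t * I) ^ 2 * (1 + exp (t * I) ^ 2) =
      2 * I * exp (t * I) ^ 3 * (4 * sin t ^ 3 + k * cos t) := by
  rw [one_sub_exp_mul_I_sq, one_add_exp_mul_I_sq]
  linear_combination -8 * I * exp (t * I) ^ 3 * sin t ^ 3 * I_sq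

/-- for every `k ∈ ℝ` the equation `(1-z)³ + ikz(1+z) = 0` has a
solution on the unit circle; i.e. for `p̃(z) = (1-z)/(1+z)` the map
`F = K_k⁻¹ ∘ p̃` has a fixed point on `𝕋` for every `k`. -/
theorem stmt_10 :
    ∀ k : ℝ, ∃ z : ℂ, ‖z‖ = 1 ∧
      (1 - z) ^ 3 + Complex.I * k * z * (1 + z) = 0 := by
  intro k
  obtain ⟨t, ht⟩ := exists_mul_sin_pow_three_add_mul_cos_eq_zero 4 k
  have ht' : 4 * sin (t : ℂ) ^ 3 + k * cos (t : ℂ) = 0 := mod_cast ht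
  refine ⟨exp (t * I) ^ 2, ?_, ?_⟩
  · rw [norm_pow, norm_exp_ofReal_mul_I, one_pow]
  · rw [one_sub_exp_sq_pow_three_add_mul_one_add_exp_sq, ht', mul_zero]
end

section
/- Let (Ω, 𝓕, P) be a probability space and B : [0,∞) × Ω → ℝ a standard one-dimensional Brownian motion: B_0 = 0 a.s., B has independent increments, B_t − B_s is Gaussian with mean 0 and variance t − s for 0 ≤ s ≤ t, each B_t is measurable, and almost every sample path is continuous. Fix k ∈ ℝ, z ∈ ℂ, t ≥ 0. Then E[ e^{-t}(z + ∫₀ᵗ e^{s} e^{ikB_s} ds) · e^{-ikB_t} ] = (1 − e^{-(1 + k²/2)t})/(1 + k²/2) + z e^{-(1 + k²/2)t}. -/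
open Complex MeasureTheory ProbabilityTheory intervalIntegral

/-!
Dividing `φ_t` by the driving point `τ_t` leaves `z e^{-t} τ_t⁻¹ + ∫₀ᵗ e^{s-t} (τ_s / τ_t) ds`.
By Fubini its mean depends on the driving process only through the correlations `E[τ_s / τ_t]`.
For `τ_s = e^{ikB_s}` these are values of the characteristic function of a Gaussian increment,
`e^{-k²(t-s)/2}`, so that what remains is an elementary exponential integral. Path continuity makes
`B` jointly measurable, as Fubini requires.
-/

section LoewnerFlow

open Function (uncurry)
open scoped NNReal

variable {Ω : Type*} [MeasurableSpace Ω] {P : Measure Ω}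

section JointMeasurability

variable {ι E : Type*} [LinearOrder ι] [TopologicalSpace ι] [OrderClosedTopology ι]
  [TopologicalSpace.MetrizableSpace ι] [SecondCountableTopology ι] [MeasurableSpace ι]
  [OpensMeasurableSpace ι] [TopologicalSpace E] [TopologicalSpace.PseudoMetrizableSpace E]
  [MeasurableSpace E] [BorelSpace E]

theorem aemeasurable_uncurry_of_ae_continuousOn_Ici {X : ι → Ω → E} {a : ι} {ν : Measure ι}
    [SFinite P] (hmeas : ∀ s, a ≤ s → Measurable (X s))
    (hcont : ∀ᵐ ω ∂P, ContinuousOn (fun s => X s ω) (Set.Ici a)) (hν : ∀ᵐ s ∂ν, a ≤ s) :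
    AEMeasurable (uncurry X) (ν.prod P) := by
  classical
  obtain ⟨N, hN_sub, hN_meas, hN_null⟩ := exists_measurable_superset_of_null (ae_iff.1 hcont)
  let Y : ι → Ω → E := fun s ω => if ω ∈ N then X a ω else X (max s a) ω
  have hY_cont (ω : Ω) : Continuous fun s => Y s ω := by
    by_cases hω : ω ∈ N
    · simpa only [Y, if_pos hω] using continuous_const
    · have hω_cont : ContinuousOn (fun s => X s ω) (Set.Ici a) :=
        not_not.1 fun h => hω (hN_sub h)
      simpa only [Y, if_neg hω, Function.comp_def] using
        hω_cont.comp_continuous (by fun_prop) fun s => le_max_right s a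
  have hY_meas (s : ι) : Measurable (Y s) :=
    (hmeas a le_rfl).ite hN_meas (hmeas _ (le_max_right s a))
  refine ⟨uncurry Y, measurable_uncurry_of_continuous_of_measurable hY_cont hY_meas, ?_⟩
  filter_upwards [Measure.quasiMeasurePreserving_fst.ae hν,
    Measure.quasiMeasurePreserving_snd.ae (measure_eq_zero_iff_ae_notMem.1 hN_null)] with p hp hpN
  simp only [uncurry, Y, if_neg hpN, max_eq_left hp]

end JointMeasurability

theorem integral_exp_mul_sub {c : ℂ} (hc : c ≠ 0) (a b : ℝ) :
    ∫ s in a..b, cexp (c * (s - b)) = (1 - cexp (-c * (b - a))) / c := by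
  have hshift : ∫ s in a..b, cexp (c * (s - b)) = ∫ s in (a - b)..(b - b), cexp (c * s) := by
    simpa only [ofReal_sub] using integral_comp_sub_right (fun s : ℝ => cexp (c * s)) b
  rw [hshift, integral_exp_mul_complex hc, sub_self, ofReal_zero, mul_zero, Complex.exp_zero]
  congr 3
  push_cast
  ring

theorem integral_exp_mul_div_exp_mul_of_map_sub_eq_gaussianReal {X Y : Ω → ℝ} {v : ℝ≥0}
    (hXY : P.map (fun ω => Y ω - X ω) = gaussianReal 0 v) (w : ℂ) :
    ∫ ω, cexp (w * X ω) / cexp (w * Y ω) ∂P = cexp (w ^ 2 / 2 * v) := by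
  calc ∫ ω, cexp (w * X ω) / cexp (w * Y ω) ∂P
      = complexMGF (fun ω => Y ω - X ω) P (-w) := by
        refine integral_congr_ae (ae_of_all _ fun ω => ?_)
        simp only [← Complex.exp_sub]
        congr 1
        push_cast
        ring
    _ = cexp (w ^ 2 / 2 * v) := by
        rw [complexMGF_gaussianReal hXY]
        congr 1
        push_cast
        ring

/-- The solution at time `t` of the Löwner equation `dφ/dt = τ - φ`, `φ 0 = z`, with Herglotz
function `τ / (τ - z)` and driving path `τ`, given by variation of constants. -/
noncomputable def loewnerFlow (τ : ℝ → ℂ) (z : ℂ) (t : ℝ) : ℂ :=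
  cexp (-t) * (z + ∫ s in (0 : ℝ)..t, cexp s * τ s)

theorem loewnerFlow_div (τ : ℝ → ℂ) (z : ℂ) (t : ℝ) :
    loewnerFlow τ z t / τ t
      = z * cexp (-t) * (1 / τ t) + ∫ s in (0 : ℝ)..t, cexp (s - t) * (τ s / τ t) := by
  have hpull : ∫ s in (0 : ℝ)..t, cexp (s - t) * (τ s / τ t)
      = cexp (-t) / τ t * ∫ s in (0 : ℝ)..t, cexp s * τ s := by
    rw [← intervalIntegral.integral_const_mul]
    refine integral_congr fun s _ => ?_
    simp only [sub_eq_add_neg, Complex.exp_add]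
    ring
  rw [hpull, loewnerFlow]
  ring

section DrivingProcess

variable [IsFiniteMeasure P] {τ : ℝ → Ω → ℂ} {t : ℝ}

theorem integrable_exp_mul_driving_div
    (hτ : AEStronglyMeasurable (uncurry τ) ((volume.restrict (Set.uIoc 0 t)).prod P))
    (hτt : AEStronglyMeasurable (τ t) P) (hnorm : ∀ s ω, ‖τ s ω‖ = 1) :
    Integrable (uncurry fun (s : ℝ) ω => cexp (s - t) * (τ s ω / τ t ω))
      ((volume.restrict (Set.uIoc 0 t)).prod P) := by
  have hexp : IntervalIntegrable (fun s : ℝ => cexp (s - t)) volume 0 t :=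
    Continuous.intervalIntegrable (by fun_prop) 0 t
  have hratio_norm (p : ℝ × Ω) : ‖τ p.1 p.2 / τ t p.2‖ ≤ 1 := by
    rw [norm_div, hnorm, hnorm, div_one]
  exact (hexp.def'.comp_fst P).mul_bdd (hτ.div₀ hτt.comp_snd) (ae_of_all _ hratio_norm)

theorem integral_intervalIntegral_exp_mul_driving_div {ψ : ℂ} (hψ : 1 + ψ ≠ 0)
    (hτ : AEStronglyMeasurable (uncurry τ) ((volume.restrict (Set.uIoc 0 t)).prod P))
    (hτt : AEStronglyMeasurable (τ t) P) (hnorm : ∀ s ω, ‖τ s ω‖ = 1)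
    (hcorr : ∀ s ∈ Set.uIcc 0 t, ∫ ω, τ s ω / τ t ω ∂P = cexp (-ψ * (t - s))) :
    ∫ ω, (∫ s in (0 : ℝ)..t, cexp (s - t) * (τ s ω / τ t ω)) ∂P
      = (1 - cexp (-(1 + ψ) * t)) / (1 + ψ) := by
  calc ∫ ω, (∫ s in (0 : ℝ)..t, cexp (s - t) * (τ s ω / τ t ω)) ∂P
      = ∫ s in (0 : ℝ)..t, (∫ ω, cexp (s - t) * (τ s ω / τ t ω) ∂P) :=
        (intervalIntegral_integral_swap (integrable_exp_mul_driving_div hτ hτt hnorm)).symm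
    _ = ∫ s in (0 : ℝ)..t, cexp ((1 + ψ) * (s - t)) := by
        refine integral_congr fun s hs => ?_
        simp only [MeasureTheory.integral_const_mul, hcorr s hs, ← Complex.exp_add]
        ring_nf
    _ = (1 - cexp (-(1 + ψ) * t)) / (1 + ψ) := by
        rw [integral_exp_mul_sub hψ, ofReal_zero, sub_zero]

theorem integral_loewnerFlow_div {ψ : ℂ} (hψ : 1 + ψ ≠ 0)
    (hτ : AEStronglyMeasurable (uncurry τ) ((volume.restrict (Set.uIoc 0 t)).prod P))
    (hτt : AEStronglyMeasurable (τ t) P) (hnorm : ∀ s ω, ‖τ s ω‖ = 1)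
    (hτ0 : ∀ᵐ ω ∂P, τ 0 ω = 1)
    (hcorr : ∀ s ∈ Set.uIcc 0 t, ∫ ω, τ s ω / τ t ω ∂P = cexp (-ψ * (t - s))) (z : ℂ) :
    ∫ ω, loewnerFlow (τ · ω) z t / τ t ω ∂P
      = (1 - cexp (-(1 + ψ) * t)) / (1 + ψ) + z * cexp (-(1 + ψ) * t) := by
  have hinitial_int : Integrable (fun ω => 1 / τ t ω) P :=
    .of_bound (aestronglyMeasurable_const.div₀ hτt) 1 (ae_of_all _ fun ω => by simp [hnorm])
  have hdriven_int :
      Integrable (fun ω => ∫ s in (0 : ℝ)..t, cexp (s - t) * (τ s ω / τ t ω)) P := by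
    simp only [intervalIntegral_eq_integral_uIoc]
    exact (integrable_exp_mul_driving_div hτ hτt hnorm).integral_prod_right.smul _
  have hinitial : ∫ ω, 1 / τ t ω ∂P = cexp (-ψ * t) := by
    calc ∫ ω, 1 / τ t ω ∂P = ∫ ω, τ 0 ω / τ t ω ∂P :=
          integral_congr_ae (hτ0.mono fun ω hω => by simp only [hω])
      _ = cexp (-ψ * t) := by rw [hcorr 0 Set.left_mem_uIcc, ofReal_zero, sub_zero]
  simp only [fun ω => loewnerFlow_div (τ · ω) z t]
  rw [integral_add (hinitial_int.const_mul _) hdriven_int, MeasureTheory.integral_const_mul,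
    hinitial, integral_intervalIntegral_exp_mul_driving_div hψ hτ hτt hnorm hcorr, mul_assoc,
    ← Complex.exp_add, add_comm]
  ring_nf

end DrivingProcess

theorem stmt_15_general [IsFiniteMeasure P] {B : ℝ → Ω → ℝ} {t : ℝ}
    (hB0 : ∀ᵐ ω ∂P, B 0 ω = 0)
    (hB : AEMeasurable (uncurry B) ((volume.restrict (Set.Ioc 0 t)).prod P))
    (hBt : AEMeasurable (B t) P)
    (hgauss : ∀ s ∈ Set.Icc 0 t,
      P.map (fun ω => B t ω - B s ω) = gaussianReal 0 (Real.toNNReal (t - s)))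
    (k : ℝ) (z : ℂ) (ht : 0 ≤ t) :
    ∫ ω, (cexp (-t) * (z + ∫ s in (0 : ℝ)..t, cexp s * cexp (I * k * B s ω)))
        * cexp (-(I * k * B t ω)) ∂P
      = (1 - cexp (-(1 + k ^ 2 / 2) * t)) / (1 + k ^ 2 / 2)
        + z * cexp (-(1 + k ^ 2 / 2) * t) := by
  have hexp : Measurable fun x : ℝ => cexp (I * k * x) := by fun_prop
  have hψ : 1 + (k : ℂ) ^ 2 / 2 ≠ 0 := by
    have : 1 + k ^ 2 / 2 ≠ 0 := by positivity
    exact_mod_cast this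
  have hnorm (s : ℝ) (ω : Ω) : ‖cexp (I * k * B s ω)‖ = 1 := by
    rw [mul_assoc, ← ofReal_mul, norm_exp_I_mul_ofReal]
  have hcorr (s : ℝ) (hs : s ∈ Set.uIcc 0 t) :
      ∫ ω, cexp (I * k * B s ω) / cexp (I * k * B t ω) ∂P = cexp (-(k ^ 2 / 2) * (t - s)) := by
    rw [Set.uIcc_of_le ht] at hs
    rw [integral_exp_mul_div_exp_mul_of_map_sub_eq_gaussianReal (hgauss s hs),
      Real.coe_toNNReal _ (sub_nonneg.2 hs.2), mul_pow, I_sq, ofReal_sub]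
    ring_nf
  rw [← Set.uIoc_of_le ht] at hB
  have hmean := integral_loewnerFlow_div (τ := fun s ω => cexp (I * k * B s ω)) hψ
    (hexp.comp_aemeasurable hB).aestronglyMeasurable
    (hexp.comp_aemeasurable hBt).aestronglyMeasurable hnorm
    (hB0.mono fun ω hω => by simp only [hω, ofReal_zero, mul_zero, Complex.exp_zero]) hcorr z
  simpa only [loewnerFlow, div_eq_mul_inv, ← Complex.exp_neg] using hmean

end LoewnerFlow

/-- for a standard one-dimensional Brownian motion `B` and the
process `φ_t(z) e^{-ikB_t}` with `φ_t(z,ω) = e^{-t}(z + ∫₀ᵗ e^{s} e^{ikB_s} ds)`,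
one has `E[φ_t(z)·e^{-ikB_t}] = (1 - e^{-(1+k²/2)t})/(1 + k²/2) + z e^{-(1+k²/2)t}`. -/
theorem stmt_15 {Ω : Type*} [MeasurableSpace Ω] (P : Measure Ω) [IsProbabilityMeasure P]
    (B : ℝ → Ω → ℝ)
    (hB0 : ∀ᵐ ω ∂P, B 0 ω = 0)
    (hindep : ∀ n : ℕ, ∀ u : Fin (n + 1) → ℝ, Monotone u → (∀ i, 0 ≤ u i) →
      iIndepFun (m := fun _ : Fin n => (inferInstance : MeasurableSpace ℝ))
        (fun i ω => B (u i.succ) ω - B (u i.castSucc) ω) P)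
    (hgauss : ∀ s t : ℝ, 0 ≤ s → s ≤ t →
      P.map (fun ω => B t ω - B s ω) = gaussianReal 0 (Real.toNNReal (t - s)))
    (hmeas : ∀ t : ℝ, 0 ≤ t → Measurable (B t))
    (hcontpath : ∀ᵐ ω ∂P, ContinuousOn (fun t => B t ω) (Set.Ici (0 : ℝ)))
    (k : ℝ) (z : ℂ) (t : ℝ) (ht : 0 ≤ t) :
    ∫ ω, (Complex.exp (-t) *
        (z + ∫ s in (0 : ℝ)..t, Complex.exp s * Complex.exp (Complex.I * k * B s ω)))
        * Complex.exp (-(Complex.I * k * B t ω)) ∂P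
      = (1 - Complex.exp (-(1 + k ^ 2 / 2) * t)) / (1 + k ^ 2 / 2)
        + z * Complex.exp (-(1 + k ^ 2 / 2) * t) :=
  stmt_15_general hB0
    (aemeasurable_uncurry_of_ae_continuousOn_Ici hmeas hcontpath
      ((ae_restrict_mem measurableSet_Ioc).mono fun _ hs => hs.1.le))
    (hmeas t ht).aemeasurable (fun s hs => hgauss s t hs.1 hs.2) k z ht
end

section
/- Let r₀ ∈ [0,1] and let r : [0,∞) → ℝ be differentiable with r(0) = r₀, 0 ≤ r(t) ≤ 1 for all t, and −(1 + r(t))² ≤ r'(t) ≤ (1 − r(t))² for all t ≥ 0. Then for all t ≥ 0: (r₀(1 − t) − t)/(1 + t(1 + r₀)) ≤ r(t) ≤ (r₀(1 − t) + t)/(1 + t(1 − r₀)). -/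
open Real Set

/-!
With `u = 1 + r` for the lower bound and `u = 1 - r` for the upper one, both estimates say that a
solution of `u' ≥ -u²` stays above the solution `u₀ / (1 + t u₀)` of the Riccati equation
`v' = -v²` with the same initial value. The difference, cleared of its denominator, is
`g = (1 + t u₀) u - u₀`; it starts at `0` and satisfies `g' ≥ -u g`, so it cannot become negative.
-/

section Comparison

variable {a b : ℝ}

theorem nonneg_of_mul_le_deriv_right_of_neg {g g' : ℝ → ℝ} {K : ℝ}
    (hg : ContinuousOn g (Icc a b))
    (hg' : ∀ x ∈ Ico a b, HasDerivWithinAt g (g' x) (Ici x) x) (ha : 0 ≤ g a)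
    (bound : ∀ x ∈ Ico a b, g x < 0 → K * g x ≤ g' x) {x : ℝ} (hx : x ∈ Icc a b) :
    0 ≤ g x := by
  suffices h : ∀ ε > 0, -g x ≤ ε from neg_nonpos.1 (le_of_forall_gt_imp_ge_of_dense h)
  intro ε hε
  -- The rate `K + 1` exceeds `K`, so `-g` cannot cross the barrier `B`, which equals `ε` at `x`.
  let B : ℝ → ℝ := fun y ↦ ε * exp ((K + 1) * (y - x))
  have B_pos (y : ℝ) : 0 < B y := by positivity
  have hasDerivAt_B (y : ℝ) : HasDerivAt B ((K + 1) * B y) y := by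
    have hlin : HasDerivAt (fun y ↦ (K + 1) * (y - x)) (K + 1) y := by
      simpa using ((hasDerivAt_id y).sub_const x).const_mul (K + 1)
    exact (hlin.exp.const_mul ε).congr_deriv (by ring)
  have neg_g_le_B : -g x ≤ B x := by
    refine image_le_of_deriv_right_lt_deriv_boundary hg.neg (fun y hy ↦ (hg' y hy).neg)
      ((neg_nonpos.2 ha).trans (B_pos a).le) hasDerivAt_B (fun y hy hyB ↦ ?_) hx
    have g_eq : g y = -B y := neg_eq_iff_eq_neg.1 hyB
    have hbound := bound y hy (by linarith [B_pos y])
    rw [g_eq] at hbound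
    linarith [B_pos y]
  simpa [B] using neg_g_le_B

theorem one_add_sub_mul_pos {c x : ℝ} (hb : 0 < 1 + (b - a) * c) (hx : x ∈ Icc a b) :
    0 < 1 + (x - a) * c := by
  rcases le_total 0 c with hc | hc
  · linarith [mul_nonneg (sub_nonneg.2 hx.1) hc]
  · linarith [mul_le_mul_of_nonpos_right (sub_le_sub_right hx.2 a) hc]

theorem div_one_add_sub_mul_le_of_neg_sq_le_deriv_right {u u' : ℝ → ℝ} (hab : a ≤ b)
    (hu : ContinuousOn u (Icc a b))
    (hu' : ∀ x ∈ Ico a b, HasDerivWithinAt u (u' x) (Ici x) x)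
    (bound : ∀ x ∈ Ico a b, -u x ^ 2 ≤ u' x) (hb : 0 < 1 + (b - a) * u a) :
    u a / (1 + (b - a) * u a) ≤ u b := by
  let g : ℝ → ℝ := fun x ↦ (1 + (x - a) * u a) * u x - u a
  have continuousOn_g : ContinuousOn g (Icc a b) := by fun_prop
  have hasDeriv_g (x : ℝ) (hx : x ∈ Ico a b) :
      HasDerivWithinAt g (u a * u x + (1 + (x - a) * u a) * u' x) (Ici x) x := by
    have hlin : HasDerivWithinAt (fun x ↦ 1 + (x - a) * u a) (u a) (Ici x) x := by
      simpa using (((hasDerivWithinAt_id x (Ici x)).sub_const a).mul_const (u a)).const_add 1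
    exact (hlin.mul (hu' x hx)).sub_const (u a)
  have neg_mul_g_le (x : ℝ) (hx : x ∈ Ico a b) :
      -u x * g x ≤ u a * u x + (1 + (x - a) * u a) * u' x := by
    calc -u x * g x = u a * u x + (1 + (x - a) * u a) * -u x ^ 2 := by ring
      _ ≤ u a * u x + (1 + (x - a) * u a) * u' x := by
        have hpos := one_add_sub_mul_pos hb (Ico_subset_Icc_self hx)
        gcongr
        exact bound x hx
  obtain ⟨K, hK⟩ := isCompact_Icc.bddAbove_image hu.neg
  have neg_u_le (x : ℝ) (hx : x ∈ Ico a b) : -u x ≤ K :=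
    hK (mem_image_of_mem _ (Ico_subset_Icc_self hx))
  have g_nonneg : 0 ≤ g b :=
    nonneg_of_mul_le_deriv_right_of_neg (K := K) continuousOn_g hasDeriv_g (by simp [g])
      (fun x hx hgx ↦
        (mul_le_mul_of_nonpos_right (neg_u_le x hx) hgx.le).trans (neg_mul_g_le x hx))
      (right_mem_Icc.2 hab)
  rw [div_le_iff₀' hb]
  exact sub_nonneg.1 g_nonneg

end Comparison

theorem div_le_of_neg_one_add_sq_le_deriv_right {r r' : ℝ → ℝ} {t : ℝ} (ht : 0 ≤ t)
    (hr : ContinuousOn r (Icc 0 t))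
    (hr' : ∀ s ∈ Ico 0 t, HasDerivWithinAt r (r' s) (Ici s) s)
    (bound : ∀ s ∈ Ico 0 t, -(1 + r s) ^ 2 ≤ r' s) (hpos : 0 < 1 + t * (1 + r 0)) :
    (r 0 * (1 - t) - t) / (1 + t * (1 + r 0)) ≤ r t := by
  have riccati := div_one_add_sub_mul_le_of_neg_sq_le_deriv_right (u := fun s ↦ 1 + r s) ht
    (hr.const_add 1) (fun s hs ↦ (hr' s hs).const_add 1) bound (by rwa [sub_zero])
  rw [sub_zero] at riccati
  calc (r 0 * (1 - t) - t) / (1 + t * (1 + r 0))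
      = (1 + r 0) / (1 + t * (1 + r 0)) - 1 := by field_simp; ring
    _ ≤ r t := by linarith

theorem le_div_of_deriv_right_le_one_sub_sq {r r' : ℝ → ℝ} {t : ℝ} (ht : 0 ≤ t)
    (hr : ContinuousOn r (Icc 0 t))
    (hr' : ∀ s ∈ Ico 0 t, HasDerivWithinAt r (r' s) (Ici s) s)
    (bound : ∀ s ∈ Ico 0 t, r' s ≤ (1 - r s) ^ 2) (hpos : 0 < 1 + t * (1 - r 0)) :
    r t ≤ (r 0 * (1 - t) + t) / (1 + t * (1 - r 0)) := by
  have lower := div_le_of_neg_one_add_sq_le_deriv_right (r := -r) ht hr.neg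
    (fun s hs ↦ (hr' s hs).neg) (fun s hs ↦ neg_le_neg (bound s hs)) hpos
  calc r t ≤ -((-r 0 * (1 - t) - t) / (1 + t * (1 - r 0))) := le_neg.1 lower
    _ = (r 0 * (1 - t) + t) / (1 + t * (1 - r 0)) := by ring

theorem stmt_18_general {r r' : ℝ → ℝ}
    (hderiv : ∀ t : ℝ, 0 ≤ t → HasDerivWithinAt r (r' t) (Ici 0) t)
    (hineq : ∀ t : ℝ, 0 ≤ t → -(1 + r t) ^ 2 ≤ r' t ∧ r' t ≤ (1 - r t) ^ 2)
    {t : ℝ} (ht : 0 ≤ t) :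
    (0 < 1 + t * (1 + r 0) → (r 0 * (1 - t) - t) / (1 + t * (1 + r 0)) ≤ r t) ∧
      (0 < 1 + t * (1 - r 0) → r t ≤ (r 0 * (1 - t) + t) / (1 + t * (1 - r 0))) := by
  have hr : ContinuousOn r (Icc 0 t) := fun s hs ↦
    (hderiv s hs.1).continuousWithinAt.mono Icc_subset_Ici_self
  have hr' (s : ℝ) (hs : s ∈ Ico 0 t) : HasDerivWithinAt r (r' s) (Ici s) s :=
    (hderiv s hs.1).mono (Ici_subset_Ici.2 hs.1)
  exact ⟨div_le_of_neg_one_add_sq_le_deriv_right ht hr hr' fun s hs ↦ (hineq s hs.1).1,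
    le_div_of_deriv_right_le_one_sub_sq ht hr hr' fun s hs ↦ (hineq s hs.1).2⟩

/-- if `r : [0,∞) → [0,1]` is differentiable with `r(0) = r₀ ∈ [0,1]`
and satisfies the differential inequalities `-(1 + r)² ≤ r' ≤ (1 - r)²`, then
`(r₀(1-t) - t)/(1 + t(1 + r₀)) ≤ r(t) ≤ (r₀(1-t) + t)/(1 + t(1 - r₀))` for all
`t ≥ 0`. -/
theorem stmt_18 (r₀ : ℝ) (hr₀ : 0 ≤ r₀ ∧ r₀ ≤ 1)
    (r : ℝ → ℝ) (r' : ℝ → ℝ) (hr0 : r 0 = r₀)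
    (hrange : ∀ t : ℝ, 0 ≤ t → 0 ≤ r t ∧ r t ≤ 1)
    (hderiv : ∀ t : ℝ, 0 ≤ t → HasDerivWithinAt r (r' t) (Set.Ici 0) t)
    (hineq : ∀ t : ℝ, 0 ≤ t → -(1 + r t) ^ 2 ≤ r' t ∧ r' t ≤ (1 - r t) ^ 2) :
    ∀ t : ℝ, 0 ≤ t →
      (r₀ * (1 - t) - t) / (1 + t * (1 + r₀)) ≤ r t ∧
      r t ≤ (r₀ * (1 - t) + t) / (1 + t * (1 - r₀)) := by
  subst hr0
  exact fun t ht ↦ (stmt_18_general hderiv hineq ht).imp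
    (· (by linarith [mul_nonneg ht hr₀.1])) (· (by linarith [mul_nonneg ht (sub_nonneg.2 hr₀.2)]))
end
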